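/- Let P be a positively oriented simple polygon with vertex sequence p : ZMod m → ℝ², and let r = p i be a reflex vertex of P. Then there exists a point q on the boundary of P that is not a vertex of P, such that the open segment between r and q is contained in the open bounded region of P, and the segment rq splits P into two simple polygons P₁ and P₂ (whose boundaries are the segment rq together with the two boundary arcs of P between r and q, where the edge of P containing q is subdivided at q) satisfying: every reflex vertex of P₁ and of P₂ is a reflex vertex of P, both P₁ and P₂ have strictly fewer reflex vertices than P, and r and q are convex vertices of both P₁ and P₂. -/

import Mathlib

open Set

noncomputable section

/-- A point in the plane. -/
abbrev Pt := ℝ × ℝ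

/-- Cross product of two plane vectors. -/
def cross (u w : Pt) : ℝ := u.1 * w.2 - u.2 * w.1

/-- A simple polygon on `m` vertices: an injective vertex sequence indexed by `ZMod m`
such that consecutive boundary edges meet exactly in their common endpoint and
non-consecutive boundary edges are disjoint. -/
structure SimplePolygon (m : ℕ) where
  p : ZMod m → Pt
  inj : Function.Injective p
  consec : ∀ i : ZMod m,
    segment ℝ (p i) (p (i + 1)) ∩ segment ℝ (p (i + 1)) (p (i + 1 + 1)) = {p (i + 1)}
  disj : ∀ i j : ZMod m, i ≠ j → i + 1 ≠ j → j + 1 ≠ i →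
    segment ℝ (p i) (p (i + 1)) ∩ segment ℝ (p j) (p (j + 1)) = ∅

namespace SimplePolygon

variable {m : ℕ} (P : SimplePolygon m)

/-- The `i`-th closed boundary edge. -/
def edge (i : ZMod m) : Set Pt := segment ℝ (P.p i) (P.p (i + 1))

/-- The boundary of the polygon: the union of its edges. -/
def boundary : Set Pt := ⋃ i : ZMod m, P.edge i

/-- The open bounded region enclosed by the polygon: the union of the bounded
connected components of the complement of the boundary. -/
def openRegion : Set Pt :=
  {x | x ∉ P.boundary ∧ Bornology.IsBounded (connectedComponentIn P.boundaryᶜ x)}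

/-- The set of vertices of the polygon. -/
def vertexSet : Set Pt := Set.range P.p

/-- The signed area of the polygon (shoelace formula). -/
def signedArea : ℝ :=
  (1 / 2) * ∑ i ∈ Finset.range m,
    ((P.p (i : ZMod m)).1 * (P.p ((i : ZMod m) + 1)).2
      - (P.p ((i : ZMod m) + 1)).1 * (P.p (i : ZMod m)).2)

/-- The polygon is positively (counterclockwise) oriented. -/
def PosOriented : Prop := 0 < P.signedArea

/-- For a positively oriented polygon: the vertex `p i` is reflex. -/
def IsReflex (i : ZMod m) : Prop :=
  cross (P.p i - P.p (i - 1)) (P.p (i + 1) - P.p i) < 0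

/-- The set of reflex vertices (as points of the plane). -/
def reflexSet : Set Pt := {x | ∃ i : ZMod m, P.IsReflex i ∧ x = P.p i}

end SimplePolygon

set_option linter.unusedSectionVars false

section
open Set

/-- vector to complex number -/
def cz (X : Pt) : ℂ := ⟨X.1, X.2⟩

def dotp (u w : Pt) : ℝ := u.1 * w.1 + u.2 * w.2

/-- signed angle of the segment `a b` seen from `X` -/
def ang (a b X : Pt) : ℝ := Complex.arg ⟨dotp (a - X) (b - X), cross (a - X) (b - X)⟩

lemma cz_ne {X : Pt} (h : X ≠ 0) : cz X ≠ 0 := by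
  intro h'
  apply h
  have h1 := congrArg Complex.re h'
  have h2 := congrArg Complex.im h'
  simp [cz] at h1 h2
  exact Prod.ext h1 h2

lemma cz_mul (u w : Pt) : (⟨dotp u w, cross u w⟩ : ℂ) = cz w * (starRingEnd ℂ) (cz u) := by
  apply Complex.ext <;> simp [cz, dotp, cross] <;> ring

/-- collinear and nonpositive dot product means in the segment -/
lemma mem_seg_of (a b X : Pt) (h0 : cross (a - X) (b - X) = 0) (h1 : dotp (a - X) (b - X) ≤ 0) :
    X ∈ segment ℝ a b := by
  by_cases hab : a = b
  · subst hab
    have : X = a := by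
      simp only [dotp, Prod.fst_sub, Prod.snd_sub] at h1
      apply Prod.ext <;> nlinarith [sq_nonneg (a.1 - X.1), sq_nonneg (a.2 - X.2)]
    subst this
    exact left_mem_segment _ _ _
  · simp only [cross, dotp, Prod.fst_sub, Prod.snd_sub] at h0 h1
    set L := (b.1 - a.1)^2 + (b.2 - a.2)^2 with hL
    have hLpos : 0 < L := by
      by_contra hn
      apply hab
      apply Prod.ext <;> nlinarith [sq_nonneg (b.1 - a.1), sq_nonneg (b.2 - a.2)]
    set T := (X.1 - a.1) * (b.1 - a.1) + (X.2 - a.2) * (b.2 - a.2) with hT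
    have hT0 : 0 ≤ T := by
      nlinarith [sq_nonneg (a.1 - X.1), sq_nonneg (a.2 - X.2)]
    have hT1 : T ≤ L := by
      nlinarith [sq_nonneg (b.1 - X.1), sq_nonneg (b.2 - X.2)]
    rw [segment_eq_image]
    refine ⟨T / L, ⟨by positivity, by rw [div_le_one hLpos]; exact hT1⟩, ?_⟩
    apply Prod.ext
    · simp only [Prod.fst_add, Prod.smul_fst, smul_eq_mul]
      field_simp
      rw [hT, hL]
      linear_combination ((b.2 - a.2)) * h0
    · simp only [Prod.snd_add, Prod.smul_snd, smul_eq_mul]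
      field_simp
      rw [hT, hL]
      linear_combination (-(b.1 - a.1)) * h0

lemma slit_of_not_mem {a b X : Pt} (h : X ∉ segment ℝ a b) :
    (⟨dotp (a - X) (b - X), cross (a - X) (b - X)⟩ : ℂ) ∈ Complex.slitPlane := by
  rw [Complex.mem_slitPlane_iff]
  by_contra hn
  push Not at hn
  exact h (mem_seg_of a b X hn.2 hn.1)

lemma cont_vec (a b : Pt) :
    Continuous (fun X : Pt => (⟨dotp (a - X) (b - X), cross (a - X) (b - X)⟩ : ℂ)) := by
  have : (fun X : Pt => (⟨dotp (a - X) (b - X), cross (a - X) (b - X)⟩ : ℂ)) =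
    fun X => Complex.equivRealProdCLM.symm (dotp (a - X) (b - X), cross (a - X) (b - X)) := by
    funext X; apply Complex.ext <;> simp
  rw [this]
  apply Complex.equivRealProdCLM.symm.continuous.comp
  unfold dotp cross
  fun_prop

lemma ang_contAt {a b X : Pt} (h : X ∉ segment ℝ a b) : ContinuousAt (ang a b) X :=
  ContinuousAt.comp (f := fun X : Pt => (⟨dotp (a - X) (b - X), cross (a - X) (b - X)⟩ : ℂ))
    (Complex.continuousAt_arg (slit_of_not_mem h)) (cont_vec a b).continuousAt

lemma ang_coe {a b X : Pt} (ha : X ≠ a) (hb : X ≠ b) :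
    (ang a b X : Real.Angle) = (Complex.arg (cz (b - X)) : Real.Angle) - Complex.arg (cz (a - X)) := by
  have ha' : cz (a - X) ≠ 0 := cz_ne (sub_ne_zero.2 ha.symm)
  have hb' : cz (b - X) ≠ 0 := cz_ne (sub_ne_zero.2 hb.symm)
  rw [ang, cz_mul, Complex.arg_mul_coe_angle hb' ((map_ne_zero _).2 ha'),
    Complex.arg_conj_coe_angle]
  exact (sub_eq_add_neg _ _).symm

lemma ang_coe' {a b X : Pt} (c : ℂ) (hc : c ≠ 0) (ha : X ≠ a) (hb : X ≠ b) :
    (ang a b X : Real.Angle) = (Complex.arg (c * cz (b - X)) : Real.Angle)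
      - Complex.arg (c * cz (a - X)) := by
  have ha' : cz (a - X) ≠ 0 := cz_ne (sub_ne_zero.2 ha.symm)
  have hb' : cz (b - X) ≠ 0 := cz_ne (sub_ne_zero.2 hb.symm)
  rw [ang_coe ha hb, Complex.arg_mul_coe_angle hc ha', Complex.arg_mul_coe_angle hc hb']
  abel

lemma ang_int {a b X : Pt} (c : ℂ) (hc : c ≠ 0) (ha : X ≠ a) (hb : X ≠ b) :
    ∃ n : ℤ, ang a b X = Complex.arg (c * cz (b - X)) - Complex.arg (c * cz (a - X))
      + 2 * Real.pi * n := by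
  have h := ang_coe' c hc ha hb
  rw [← Real.Angle.coe_sub, Real.Angle.angle_eq_iff_two_pi_dvd_sub] at h
  obtain ⟨n, hn⟩ := h
  exact ⟨n, by linarith⟩

lemma ang_pos {a b X : Pt} (h : 0 < cross (a - X) (b - X)) : 0 < ang a b X ∧ ang a b X < Real.pi := by
  have h0 : 0 ≤ ang a b X := Complex.arg_nonneg_iff.2 h.le
  have h1 : ang a b X < Real.pi := Complex.arg_lt_pi_iff.2 (Or.inr h.ne')
  refine ⟨lt_of_le_of_ne h0 ?_, h1⟩
  intro h2
  have := (Complex.arg_eq_zero_iff.1 h2.symm).2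
  exact h.ne' this

lemma ang_neg {a b X : Pt} (h : cross (a - X) (b - X) < 0) : -Real.pi < ang a b X ∧ ang a b X < 0 :=
  ⟨Complex.neg_pi_lt_arg _, Complex.arg_neg_iff.2 h⟩

lemma ang_lt {a b X : Pt} (h : X ∉ segment ℝ a b) : |ang a b X| < Real.pi := by
  rw [abs_lt]
  refine ⟨Complex.neg_pi_lt_arg _, ?_⟩
  have := Complex.mem_slitPlane_iff_arg.1 (slit_of_not_mem h)
  exact lt_of_le_of_ne (Complex.arg_le_pi _) this.1

lemma ne_of_not_mem_seg {a b X : Pt} (h : X ∉ segment ℝ a b) : X ≠ a ∧ X ≠ b :=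
  ⟨fun h' => h (h' ▸ left_mem_segment _ _ _), fun h' => h (h' ▸ right_mem_segment _ _ _)⟩

lemma int_zero_of {n : ℤ} {x : ℝ} (h : x = 2 * Real.pi * n) (h1 : |x| < 2 * Real.pi) : n = 0 := by
  have hpi := Real.pi_pos
  rw [h, abs_lt] at h1
  have h2 : (n : ℝ) < 1 := by nlinarith
  have h3 : (-1 : ℝ) < n := by nlinarith
  have h2' : n < 1 := by exact_mod_cast h2
  have h3' : -1 < n := by exact_mod_cast h3
  omega

/-- from a half plane, no branch correction -/
lemma ang_half {a b X : Pt} (c : ℂ) (ha : 0 < (c * cz (a - X)).re) (hb : 0 < (c * cz (b - X)).re) :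
    ang a b X = Complex.arg (c * cz (b - X)) - Complex.arg (c * cz (a - X)) := by
  have hpi := Real.pi_pos
  have hc : c ≠ 0 := by rintro rfl; simp at ha
  have ha0 : X ≠ a := by rintro rfl; simp [cz] at ha
  have hb0 : X ≠ b := by rintro rfl; simp [cz] at hb
  obtain ⟨n, hn⟩ := ang_int c hc ha0 hb0
  have h1 := abs_lt.1 (Complex.abs_arg_lt_pi_div_two_iff.2 (Or.inl ha))
  have h2 := abs_lt.1 (Complex.abs_arg_lt_pi_div_two_iff.2 (Or.inl hb))
  have h3 : -Real.pi < ang a b X := Complex.neg_pi_lt_arg _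
  have h4 : ang a b X ≤ Real.pi := Complex.arg_le_pi _
  have : n = 0 := int_zero_of (x := ang a b X - (Complex.arg (c * cz (b - X)) - Complex.arg (c * cz (a - X)))) (by linarith) (by rw [abs_lt]; constructor <;> linarith)
  rw [hn, this]; simp

/-- crossing number contribution -/
def cr (a b X : Pt) : ℤ :=
  if b.1 < X.1 ∧ X.1 < a.1 ∧ 0 < cross (a - X) (b - X) then 1
  else if a.1 < X.1 ∧ X.1 < b.1 ∧ cross (a - X) (b - X) < 0 then -1 else 0

def phi (v X : Pt) : ℝ := Complex.arg (Complex.I * cz (v - X))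

lemma phi_pos {v X : Pt} (h : X.1 < v.1) : 0 < phi v X ∧ phi v X < Real.pi := by
  have him : (Complex.I * cz (v - X)).im = v.1 - X.1 := by simp [cz]
  have h0 : 0 ≤ phi v X := Complex.arg_nonneg_iff.2 (by rw [him]; linarith)
  have h1 : phi v X < Real.pi := Complex.arg_lt_pi_iff.2 (Or.inr (by rw [him]; linarith))
  refine ⟨lt_of_le_of_ne h0 ?_, h1⟩
  intro h2
  have := (Complex.arg_eq_zero_iff.1 h2.symm).2
  rw [him] at this
  linarith

lemma phi_neg {v X : Pt} (h : v.1 < X.1) : -Real.pi < phi v X ∧ phi v X < 0 := by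
  have him : (Complex.I * cz (v - X)).im = v.1 - X.1 := by simp [cz]
  exact ⟨Complex.neg_pi_lt_arg _, Complex.arg_neg_iff.2 (by rw [him]; linarith)⟩

lemma ang_cr {a b X : Pt} (ha : a.1 ≠ X.1) (hb : b.1 ≠ X.1) (h : X ∉ segment ℝ a b) :
    ang a b X = phi b X - phi a X + 2 * Real.pi * cr a b X := by
  have hpi := Real.pi_pos
  obtain ⟨ha0, hb0⟩ := ne_of_not_mem_seg h
  obtain ⟨n, hn⟩ := ang_int Complex.I Complex.I_ne_zero ha0 hb0
  change ang a b X = phi b X - phi a X + 2 * Real.pi * n at hn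
  have hl := abs_lt.1 (ang_lt h)
  suffices hnc : n - cr a b X = 0 by
    rw [hn, sub_eq_zero.1 hnc]
  apply int_zero_of (x := ang a b X - (phi b X - phi a X + 2 * Real.pi * cr a b X))
  · push_cast; rw [hn]; ring
  rcases lt_or_gt_of_ne ha with ha1 | ha1 <;> rcases lt_or_gt_of_ne hb with hb1 | hb1
  · have h1 := phi_neg ha1
    have h2 := phi_neg hb1
    have : cr a b X = 0 := by
      unfold cr; rw [if_neg (by intro h; linarith [h.2.1]), if_neg (by intro h; linarith [h.2.1])]
    rw [this, abs_lt]; push_cast; constructor <;> linarith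
  · have h1 := phi_neg ha1
    have h2 := phi_pos hb1
    have hne : cross (a - X) (b - X) ≠ 0 := by
      intro h0
      refine h (mem_seg_of a b X h0 ?_)
      simp only [cross, dotp, Prod.fst_sub, Prod.snd_sub] at h0 ⊢
      have e1 : 0 < X.1 - a.1 := by linarith
      have e2 : 0 < b.1 - X.1 := by linarith
      have : (b.1 - X.1) * (a.2 - X.2) = -(X.1 - a.1) * (b.2 - X.2) := by linarith
      by_contra hc
      push Not at hc
      have h5 : (b.1 - X.1) * ((a.2 - X.2) * (b.2 - X.2)) = -(X.1 - a.1) * (b.2 - X.2)^2 := by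
        linear_combination (b.2 - X.2) * this
      have h6 : (a.2 - X.2) * (b.2 - X.2) ≤ 0 := by
        by_contra h7
        push Not at h7
        nlinarith [mul_pos e2 h7, mul_nonneg e1.le (sq_nonneg (b.2 - X.2))]
      nlinarith [mul_pos e1 e2]
    rcases lt_or_gt_of_ne hne with hc | hc
    · have : cr a b X = -1 := by
        unfold cr; rw [if_neg (by intro h; linarith [h.2.1]), if_pos ⟨ha1, hb1, hc⟩]
      have h3 := ang_neg hc
      rw [this, abs_lt]; push_cast; constructor <;> linarith
    · have : cr a b X = 0 := by
        unfold cr; rw [if_neg (by intro h; linarith [h.2.1]), if_neg (by intro h; linarith [h.2.2])]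
      have h3 := ang_pos hc
      rw [this, abs_lt]; push_cast; constructor <;> linarith
  · have h1 := phi_pos ha1
    have h2 := phi_neg hb1
    have hne : cross (a - X) (b - X) ≠ 0 := by
      intro h0
      refine h (mem_seg_of a b X h0 ?_)
      simp only [cross, dotp, Prod.fst_sub, Prod.snd_sub] at h0 ⊢
      have e1 : 0 < a.1 - X.1 := by linarith
      have e2 : 0 < X.1 - b.1 := by linarith
      have h5 : (X.1 - b.1) * ((a.2 - X.2) * (b.2 - X.2)) = -(a.1 - X.1) * (b.2 - X.2)^2 := by
        linear_combination (b.2 - X.2) * h0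
      have h6 : (a.2 - X.2) * (b.2 - X.2) ≤ 0 := by
        by_contra h7
        push Not at h7
        nlinarith [mul_pos e2 h7, mul_nonneg e1.le (sq_nonneg (b.2 - X.2))]
      nlinarith [mul_pos e1 e2]
    rcases lt_or_gt_of_ne hne with hc | hc
    · have : cr a b X = 0 := by
        unfold cr; rw [if_neg (by intro h; linarith [h.2.2]), if_neg (by intro h; linarith [h.2.1])]
      have h3 := ang_neg hc
      rw [this, abs_lt]; push_cast; constructor <;> linarith
    · have : cr a b X = 1 := by
        unfold cr; rw [if_pos ⟨hb1, ha1, hc⟩]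
      have h3 := ang_pos hc
      rw [this, abs_lt]; push_cast; constructor <;> linarith
  · have h1 := phi_pos ha1
    have h2 := phi_pos hb1
    have : cr a b X = 0 := by
      unfold cr; rw [if_neg (by intro h; linarith [h.1]), if_neg (by intro h; linarith [h.1])]
    rw [this, abs_lt]; push_cast; constructor <;> linarith

lemma ang_swap {a b X : Pt} (h : X ∉ segment ℝ a b) : ang a b X + ang b a X = 0 := by
  have h' : X ∉ segment ℝ b a := by rwa [segment_symm]
  obtain ⟨ha0, hb0⟩ := ne_of_not_mem_seg h
  obtain ⟨n, hn⟩ := ang_int 1 one_ne_zero ha0 hb0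
  obtain ⟨n', hn'⟩ := ang_int 1 one_ne_zero hb0 ha0
  have h1 := abs_lt.1 (ang_lt h)
  have h2 := abs_lt.1 (ang_lt h')
  have : n + n' = 0 := int_zero_of (x := ang a b X + ang b a X)
    (by rw [hn, hn']; push_cast; ring) (by rw [abs_lt]; constructor <;> linarith)
  have h3 : (n : ℝ) + n' = 0 := by exact_mod_cast this
  rw [hn, hn']; linear_combination 2 * Real.pi * h3

/-- additivity of the angle along a segment -/
lemma ang_add {a b q X : Pt} (t : ℝ) (ht0 : 0 < t) (ht1 : t < 1) (hq : q = a + t • (b - a))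
    (h : X ∉ segment ℝ a b) (hc : cross (a - X) (b - X) ≠ 0) :
    ang a q X + ang q b X = ang a b X := by
  have hpi := Real.pi_pos
  obtain ⟨ha0, hb0⟩ := ne_of_not_mem_seg h
  have e1 : cross (a - X) (q - X) = t * cross (a - X) (b - X) := by
    subst hq; simp [cross]; ring
  have e2 : cross (q - X) (b - X) = (1 - t) * cross (a - X) (b - X) := by
    subst hq; simp [cross]; ring
  have hq0 : X ≠ q := by
    rintro rfl
    apply mul_ne_zero ht0.ne' hc
    rw [← e1]; simp [cross]
  obtain ⟨n, hn⟩ := ang_int 1 one_ne_zero ha0 hb0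
  obtain ⟨n', hn'⟩ := ang_int 1 one_ne_zero ha0 hq0
  obtain ⟨n'', hn''⟩ := ang_int 1 one_ne_zero hq0 hb0
  have key : |ang a q X + ang q b X - ang a b X| < 2 * Real.pi := by
    rw [abs_lt]
    rcases lt_or_gt_of_ne hc with hc | hc
    · have k1 := ang_neg hc
      have k2 := ang_neg (a := a) (b := q) (X := X) (by rw [e1]; nlinarith)
      have k3 := ang_neg (a := q) (b := b) (X := X) (by rw [e2]; nlinarith)
      constructor <;> linarith
    · have k1 := ang_pos hc
      have k2 := ang_pos (a := a) (b := q) (X := X) (by rw [e1]; positivity)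
      have k3 := ang_pos (a := q) (b := b) (X := X) (by rw [e2]; nlinarith)
      constructor <;> linarith
  have : n' + n'' - n = 0 := int_zero_of (by rw [hn, hn', hn'']; push_cast; ring) key
  have h3 : (n' : ℝ) + n'' - n = 0 := by exact_mod_cast this
  rw [hn, hn', hn'']; linear_combination 2 * Real.pi * h3

end

section
open Set

open Filter Topology

namespace SimplePolygon
variable {m : ℕ} [NeZero m] (P : SimplePolygon m)

def wind (X : Pt) : ℝ := (∑ i : ZMod m, ang (P.p i) (P.p (i + 1)) X) / (2 * Real.pi)

def side (i : ZMod m) (X : Pt) : ℝ := cross (P.p i - X) (P.p (i + 1) - X)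

variable {P}

lemma not_mem_edge {X : Pt} (h : X ∉ P.boundary) (i : ZMod m) :
    X ∉ segment ℝ (P.p i) (P.p (i + 1)) :=
  fun h' => h (mem_iUnion.2 ⟨i, h'⟩)

lemma sum_shift {M : Type*} [AddCommMonoid M] (f : ZMod m → M) : ∑ i, f (i + 1) = ∑ i, f i :=
  Equiv.sum_comp (Equiv.addRight (1 : ZMod m)) f

lemma wind_int {X : Pt} (h : X ∉ P.boundary) : ∃ n : ℤ, P.wind X = n := by
  have h1 : ∀ i, ∃ n : ℤ, ang (P.p i) (P.p (i + 1)) X = Complex.arg (1 * cz (P.p (i + 1) - X))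
    - Complex.arg (1 * cz (P.p i - X)) + 2 * Real.pi * n := fun i =>
    ang_int 1 one_ne_zero (ne_of_not_mem_seg (not_mem_edge h i)).1
      (ne_of_not_mem_seg (not_mem_edge h i)).2
  choose n hn using h1
  refine ⟨∑ i, n i, ?_⟩
  have hpi := Real.pi_pos
  rw [wind, Finset.sum_congr rfl (fun i _ => hn i), Finset.sum_add_distrib, Finset.sum_sub_distrib,
    sum_shift (fun i => Complex.arg (1 * cz (P.p i - X))), sub_self, ← Finset.mul_sum]
  push_cast
  field_simp
  ring

lemma wind_contAt {X : Pt} (h : X ∉ P.boundary) : ContinuousAt P.wind X := by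
  unfold wind
  apply ContinuousAt.div_const
  apply tendsto_finsetSum
  intro i _
  exact ang_contAt (not_mem_edge h i)

lemma wind_const {C : Set Pt} (hC : IsPreconnected C) (h : ∀ X ∈ C, X ∉ P.boundary)
    {x y : Pt} (hx : x ∈ C) (hy : y ∈ C) : P.wind x = P.wind y := by
  have : ∀ X : C, ∃ n : ℤ, P.wind X = n := fun X => wind_int (h X X.2)
  choose n hn using this
  have hcont : Continuous n := by
    rw [Int.isClosedEmbedding_coe_real.isEmbedding.continuous_iff]
    have : ((fun k : ℤ => (k : ℝ)) ∘ n) = fun X : C => P.wind X := by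
      funext X; simp [hn]
    rw [this]
    rw [continuous_iff_continuousAt]
    intro X
    exact (wind_contAt (h X X.2)).comp continuous_subtype_val.continuousAt
  have := isPreconnected_iff_preconnectedSpace.1 hC
  have h2 := PreconnectedSpace.constant (inferInstance : PreconnectedSpace C) hcont
    (x := ⟨x, hx⟩) (y := ⟨y, hy⟩)
  rw [hn ⟨x, hx⟩, hn ⟨y, hy⟩, h2]

lemma isCompact_boundary (P : SimplePolygon m) : IsCompact P.boundary := by
  apply isCompact_iUnion
  intro i
  rw [edge, segment_eq_image]
  exact isCompact_Icc.image (by fun_prop)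

lemma wind_sep {X : Pt} (c : ℂ) (h : ∀ i, 0 < (c * cz (P.p i - X)).re) : P.wind X = 0 := by
  rw [wind, Finset.sum_congr rfl (fun i _ => ang_half c (h i) (h (i + 1))), Finset.sum_sub_distrib,
    sum_shift (fun i => Complex.arg (c * cz (P.p i - X)))]
  simp

lemma wind_far (P : SimplePolygon m) : ∃ R : ℝ, ∀ X : Pt, R < ‖X‖ → X ∉ P.boundary ∧ P.wind X = 0 := by
  obtain ⟨R, hR⟩ := P.isCompact_boundary.isBounded.exists_norm_le
  refine ⟨R, fun X hX => ⟨fun h => absurd (hR X h) (not_le.2 hX), ?_⟩⟩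
  have hv : ∀ i, |(P.p i).1| ≤ R ∧ |(P.p i).2| ≤ R := by
    intro i
    have := hR (P.p i) (mem_iUnion.2 ⟨i, left_mem_segment _ _ _⟩)
    rw [Prod.norm_def] at this
    exact ⟨(le_max_left _ _).trans this, (le_max_right _ _).trans this⟩
  rw [Prod.norm_def, lt_max_iff] at hX
  simp only [Real.norm_eq_abs, lt_abs] at hX
  rcases hX with (h | h) | (h | h)
  · apply wind_sep (-1); intro i; have := (abs_le.1 (hv i).1); simp [cz]; linarith
  · apply wind_sep (1); intro i; have := (abs_le.1 (hv i).1); simp [cz]; linarith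
  · apply wind_sep (Complex.I); intro i; have := (abs_le.1 (hv i).2); simp [cz]; linarith
  · apply wind_sep (-Complex.I); intro i; have := (abs_le.1 (hv i).2); simp [cz]; linarith

lemma mem_openRegion {X : Pt} (h : X ∉ P.boundary) (hw : P.wind X ≠ 0) : X ∈ P.openRegion := by
  refine ⟨h, ?_⟩
  obtain ⟨R, hR⟩ := P.wind_far
  rw [isBounded_iff_forall_norm_le]
  refine ⟨R, fun Y hY => ?_⟩
  by_contra hn
  apply hw
  rw [← (hR Y (not_le.1 hn)).2]
  exact wind_const isPreconnected_connectedComponentIn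
    (fun Z hZ => connectedComponentIn_subset _ _ hZ) (mem_connectedComponentIn h) hY

/-! ### jump across an edge -/

lemma p_ne (hm : 3 ≤ m) (i : ZMod m) : P.p i ≠ P.p (i + 1) := by
  intro h
  have h1 := P.inj h
  have : Fact (1 < m) := ⟨by omega⟩
  have h2 : (1 : ZMod m) = 0 := by
    calc (1 : ZMod m) = (i + 1) - i := by ring
      _ = 0 := by rw [← h1]; ring
  exact one_ne_zero h2

lemma other_edge (hm : 3 ≤ m) {i j : ZMod m} {z : Pt} (hz : z ∈ openSegment ℝ (P.p i) (P.p (i + 1)))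
    (hj : j ≠ i) : z ∉ segment ℝ (P.p j) (P.p (j + 1)) := by
  intro h
  have hz' := openSegment_subset_segment _ _ _ hz
  have hne := P.p_ne hm i
  by_cases h1 : i + 1 = j
  · subst h1
    have : z ∈ ({P.p (i + 1)} : Set Pt) := by rw [← P.consec i]; exact ⟨hz', h⟩
    rw [mem_singleton_iff] at this
    subst this
    exact hne (right_mem_openSegment_iff.1 hz)
  by_cases h2 : j + 1 = i
  · subst h2
    have : z ∈ ({P.p (j + 1)} : Set Pt) := by rw [← P.consec j]; exact ⟨h, hz'⟩
    rw [mem_singleton_iff] at this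
    subst this
    exact hne (left_mem_openSegment_iff.1 hz)
  have : z ∈ (∅ : Set Pt) := by rw [← P.disj i j (Ne.symm hj) h1 h2]; exact ⟨hz', h⟩
  exact this

lemma side_eq_zero {i : ZMod m} {z : Pt} (hz : z ∈ segment ℝ (P.p i) (P.p (i + 1))) :
    P.side i z = 0 := by
  rw [segment_eq_image'] at hz
  obtain ⟨t, _, rfl⟩ := hz
  simp [side, cross]; ring

lemma side_eq (i : ZMod m) (X : Pt) :
    P.side i X = cross (P.p (i + 1) - P.p i) (X - P.p i) := by
  simp [side, cross]; ring

lemma dot_neg (hm : 3 ≤ m) {i : ZMod m} {z : Pt} (hz : z ∈ openSegment ℝ (P.p i) (P.p (i + 1))) :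
    dotp (P.p i - z) (P.p (i + 1) - z) < 0 := by
  have hne := P.p_ne hm i
  rw [openSegment_eq_image'] at hz
  obtain ⟨t, ht, rfl⟩ := hz
  have : 0 < ((P.p (i+1)).1 - (P.p i).1)^2 + ((P.p (i+1)).2 - (P.p i).2)^2 := by
    by_contra hn
    apply hne
    apply Prod.ext <;> nlinarith [sq_nonneg ((P.p (i+1)).1 - (P.p i).1), sq_nonneg ((P.p (i+1)).2 - (P.p i).2)]
  have h2 := mul_pos (mul_pos ht.1 (sub_pos.2 ht.2)) this
  simp [dotp]; nlinarith

lemma isClosed_edge (j : ZMod m) : IsClosed (segment ℝ (P.p j) (P.p (j + 1))) := by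
  rw [segment_eq_image]
  exact (isCompact_Icc.image (by fun_prop)).isClosed

lemma ev_avoid {z : Pt} (s : Set (ZMod m)) (h : ∀ j ∈ s, z ∉ segment ℝ (P.p j) (P.p (j + 1))) :
    ∀ᶠ X in 𝓝 z, ∀ j ∈ s, X ∉ segment ℝ (P.p j) (P.p (j + 1)) := by
  have : ∀ j, ∀ᶠ X in 𝓝 z, j ∈ s → X ∉ segment ℝ (P.p j) (P.p (j + 1)) := by
    intro j
    by_cases hj : j ∈ s
    · filter_upwards [(isClosed_edge j).isOpen_compl.mem_nhds (h j hj)] with X hX _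
      exact hX
    · exact Eventually.of_forall (fun X h' => absurd h' hj)
  exact eventually_all.2 this

/-- points on either side arbitrarily near -/
lemma freq_side (hm : 3 ≤ m) {i : ZMod m} {z : Pt} (hz : z ∈ openSegment ℝ (P.p i) (P.p (i + 1))) :
    (∃ᶠ X in 𝓝 z, 0 < P.side i X) ∧ (∃ᶠ X in 𝓝 z, P.side i X < 0) := by
  have h0 := side_eq_zero (openSegment_subset_segment _ _ _ hz)
  have hne := P.p_ne hm i
  set n : Pt := (-((P.p (i+1)).2 - (P.p i).2), (P.p (i+1)).1 - (P.p i).1) with hn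
  have hL : 0 < ((P.p (i+1)).1 - (P.p i).1)^2 + ((P.p (i+1)).2 - (P.p i).2)^2 := by
    by_contra hn
    apply hne
    apply Prod.ext <;> nlinarith [sq_nonneg ((P.p (i+1)).1 - (P.p i).1), sq_nonneg ((P.p (i+1)).2 - (P.p i).2)]
  have hs : ∀ t : ℝ, P.side i (z + t • n) =
      t * (((P.p (i+1)).1 - (P.p i).1)^2 + ((P.p (i+1)).2 - (P.p i).2)^2) := by
    intro t
    have : P.side i (z + t • n) = P.side i z + t * (((P.p (i+1)).1 - (P.p i).1)^2 + ((P.p (i+1)).2 - (P.p i).2)^2) := by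
      simp [side, cross, hn]; ring
    rw [this, h0, zero_add]
  have ht : Tendsto (fun t : ℝ => z + t • n) (𝓝 0) (𝓝 z) := by
    have : Continuous (fun t : ℝ => z + t • n) := by fun_prop
    simpa using this.tendsto 0
  constructor
  · apply (ht.mono_left (nhdsWithin_le_nhds (s := Ioi 0))).frequently
    apply Eventually.frequently
    filter_upwards [self_mem_nhdsWithin] with t ht
    rw [hs]; exact mul_pos ht hL
  · apply (ht.mono_left (nhdsWithin_le_nhds (s := Iio 0))).frequently
    apply Eventually.frequently
    filter_upwards [self_mem_nhdsWithin] with t ht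
    rw [hs]; exact mul_neg_of_neg_of_pos ht hL

lemma int_eq_of {a b : ℤ} (h : |2 * Real.pi * (a : ℝ) - 2 * Real.pi * b| < 2 * Real.pi) : a = b := by
  have := int_zero_of (n := a - b) (x := 2 * Real.pi * (a : ℝ) - 2 * Real.pi * b)
    (by push_cast; ring) h
  omega

lemma jump (hm : 3 ≤ m) {i : ZMod m} {z : Pt} (hz : z ∈ openSegment ℝ (P.p i) (P.p (i + 1))) :
    ∃ n : ℤ, ∀ᶠ X in 𝓝 z, (0 < P.side i X → X ∉ P.boundary ∧ P.wind X = n + 1) ∧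
      (P.side i X < 0 → X ∉ P.boundary ∧ P.wind X = n) ∧ (X ∉ P.boundary → P.side i X ≠ 0) := by
  have hpi := Real.pi_pos
  set h : Pt → ℝ := fun X => ∑ j ∈ Finset.univ.erase i, ang (P.p j) (P.p (j + 1)) X with hh
  have hsum : ∀ X, 2 * Real.pi * P.wind X = ang (P.p i) (P.p (i + 1)) X + h X := by
    intro X
    rw [hh, Finset.add_sum_erase Finset.univ (fun j => ang (P.p j) (P.p (j + 1)) X) (Finset.mem_univ i)]
    unfold wind; field_simp
  have hhc : ContinuousAt h z := by
    apply tendsto_finsetSum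
    intro j hj
    exact ang_contAt (other_edge hm hz (Finset.ne_of_mem_erase hj))
  have hre : dotp (P.p i - z) (P.p (i + 1) - z) < 0 := dot_neg hm hz
  have him : cross (P.p i - z) (P.p (i + 1) - z) = 0 :=
    side_eq_zero (openSegment_subset_segment _ _ _ hz)
  have havoid := ev_avoid (P := P) (z := z) {j | j ≠ i} (fun j hj => other_edge hm hz hj)
  have hoff : ∀ᶠ X in 𝓝 z, P.side i X ≠ 0 → X ∉ P.boundary := by
    filter_upwards [havoid] with X hX hs hb
    obtain ⟨j, hj⟩ := mem_iUnion.1 hb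
    by_cases hji : j = i
    · subst hji; exact hs (side_eq_zero hj)
    · exact hX j hji hj
  have hon : ∀ᶠ X in 𝓝 z, X ∉ P.boundary → P.side i X ≠ 0 := by
    have hc : ContinuousAt (fun X => dotp (P.p i - X) (P.p (i + 1) - X)) z := by
      unfold dotp; fun_prop
    filter_upwards [hc.eventually_lt continuousAt_const hre] with X hX hb h0
    exact hb (mem_iUnion.2 ⟨i, mem_seg_of _ _ _ h0 hX.le⟩)
  have hvec := (cont_vec (P.p i) (P.p (i + 1))).tendsto z
  have hleft : ∀ᶠ X in 𝓝 z, 0 < P.side i X → |2 * Real.pi * P.wind X - (Real.pi + h z)| < Real.pi / 2 := by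
    have h1 := Complex.continuousWithinAt_arg_of_re_neg_of_im_zero (z := ⟨_, _⟩) hre him
    have h2 : Tendsto (ang (P.p i) (P.p (i + 1))) (𝓝[{X | 0 < P.side i X}] z) (𝓝 Real.pi) := by
      have h3 : Complex.arg ⟨dotp (P.p i - z) (P.p (i + 1) - z), cross (P.p i - z) (P.p (i + 1) - z)⟩ = Real.pi :=
        Complex.arg_eq_pi_iff.2 ⟨hre, him⟩
      rw [← h3]
      refine h1.tendsto.comp ?_
      rw [tendsto_nhdsWithin_iff]
      refine ⟨hvec.mono_left nhdsWithin_le_nhds, ?_⟩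
      filter_upwards [self_mem_nhdsWithin] with X hX
      exact le_of_lt hX
    have h3 := h2.add (hhc.tendsto.mono_left (nhdsWithin_le_nhds (s := {X | 0 < P.side i X})))
    have h4 := h3.eventually (Metric.ball_mem_nhds _ (half_pos hpi))
    rw [eventually_nhdsWithin_iff] at h4
    filter_upwards [h4] with X hX hs
    rw [hsum]; exact hX hs
  have hright : ∀ᶠ X in 𝓝 z, P.side i X < 0 → |2 * Real.pi * P.wind X - (-Real.pi + h z)| < Real.pi / 2 := by
    have h1 := Complex.tendsto_arg_nhdsWithin_im_neg_of_re_neg_of_im_zero (z := ⟨_, _⟩) hre him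
    have h2 : Tendsto (ang (P.p i) (P.p (i + 1))) (𝓝[{X | P.side i X < 0}] z) (𝓝 (-Real.pi)) := by
      refine h1.comp ?_
      rw [tendsto_nhdsWithin_iff]
      refine ⟨hvec.mono_left nhdsWithin_le_nhds, ?_⟩
      filter_upwards [self_mem_nhdsWithin] with X hX
      exact hX
    have h3 := h2.add (hhc.tendsto.mono_left (nhdsWithin_le_nhds (s := {X | P.side i X < 0})))
    have h4 := h3.eventually (Metric.ball_mem_nhds _ (half_pos hpi))
    rw [eventually_nhdsWithin_iff] at h4
    filter_upwards [h4] with X hX hs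
    rw [hsum]; exact hX hs
  obtain ⟨X0, hX0s, hX0, hX0'⟩ := ((freq_side hm hz).1.and_eventually (hleft.and hoff)).exists
  obtain ⟨n, hn⟩ := wind_int (hX0' hX0s.ne')
  have e0 := hX0 hX0s
  rw [hn, abs_lt] at e0
  refine ⟨n - 1, ?_⟩
  filter_upwards [hleft, hright, hoff, hon] with X hl hr ho hon
  refine ⟨fun hs => ⟨ho hs.ne', ?_⟩, fun hs => ⟨ho hs.ne, ?_⟩, hon⟩
  · obtain ⟨n', hn'⟩ := wind_int (ho hs.ne')
    have e1 := hl hs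
    rw [hn', abs_lt] at e1
    have : n' = n := int_eq_of (by rw [abs_lt]; constructor <;> linarith)
    rw [hn', this]; push_cast; ring
  · obtain ⟨n', hn'⟩ := wind_int (ho hs.ne)
    have e1 := hr hs
    rw [hn', abs_lt] at e1
    have : n' = n - 1 := int_eq_of (by push_cast; rw [abs_lt]; constructor <;> linarith)
    rw [hn', this]

/-- both and only values n, n+1 occur near z -/
def Good (P : SimplePolygon m) (z : Pt) (n : ℤ) : Prop :=
  (∀ᶠ X in 𝓝 z, X ∉ P.boundary → P.wind X = n ∨ P.wind X = n + 1) ∧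
  (∃ᶠ X in 𝓝 z, X ∉ P.boundary ∧ P.wind X = n) ∧
  (∃ᶠ X in 𝓝 z, X ∉ P.boundary ∧ P.wind X = n + 1)

lemma good_edge (hm : 3 ≤ m) {i : ZMod m} {z : Pt} (hz : z ∈ openSegment ℝ (P.p i) (P.p (i + 1))) :
    ∃ n, P.Good z n := by
  obtain ⟨n, hn⟩ := jump hm hz
  refine ⟨n, ?_, ?_, ?_⟩
  · filter_upwards [hn] with X ⟨h1, h2, h3⟩ hb
    rcases lt_or_gt_of_ne (h3 hb) with h | h
    · exact Or.inl (h2 h).2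
    · exact Or.inr (h1 h).2
  · exact ((freq_side hm hz).2.and_eventually hn).mono (fun X hX => hX.2.2.1 hX.1)
  · exact ((freq_side hm hz).1.and_eventually hn).mono (fun X hX => hX.2.1 hX.1)

/-- if only two values occur near z, then they are those of the good points nearby -/
lemma good_of_two {z : Pt} {α β : ℝ} (h : ∀ᶠ X in 𝓝 z, X ∉ P.boundary → P.wind X = α ∨ P.wind X = β) :
    ∀ᶠ z' in 𝓝 z, ∀ n : ℤ, P.Good z' n → (α = n ∧ β = n + 1) ∨ (α = n + 1 ∧ β = n) := by
  filter_upwards [eventually_eventually_nhds.2 h] with z' hz' n hn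
  obtain ⟨X, ⟨hX1, hX2⟩, hX3⟩ := (hn.2.1.and_eventually hz').exists
  obtain ⟨Y, ⟨hY1, hY2⟩, hY3⟩ := (hn.2.2.and_eventually hz').exists
  rcases hX3 hX1 with h1 | h1 <;> rcases hY3 hY1 with h2 | h2
  · linarith
  · left; constructor <;> linarith
  · right; constructor <;> linarith
  · linarith

lemma good_unique {z : Pt} {n : ℤ} (h : P.Good z n) :
    ∀ᶠ z' in 𝓝 z, ∀ n' : ℤ, P.Good z' n' → n' = n := by
  filter_upwards [good_of_two h.1] with z' hz' n' hn'
  rcases hz' n' hn' with h1 | h1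
  · exact_mod_cast h1.1.symm
  · have := h1.1; have := h1.2; linarith

lemma good_vertex (hm : 3 ≤ m) {i : ZMod m} {α β : ℝ}
    (h : ∀ᶠ X in 𝓝 (P.p i), X ∉ P.boundary → P.wind X = α ∨ P.wind X = β) :
    ∃ n, P.Good (P.p i) n := by
  have hfr : ∃ᶠ z in 𝓝 (P.p i), z ∈ openSegment ℝ (P.p i) (P.p (i + 1)) := by
    have ht : Tendsto (fun t : ℝ => P.p i + t • (P.p (i + 1) - P.p i)) (𝓝[>] 0) (𝓝 (P.p i)) := by
      have : Continuous (fun t : ℝ => P.p i + t • (P.p (i + 1) - P.p i)) := by fun_prop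
      simpa using (this.tendsto 0).mono_left (nhdsWithin_le_nhds (s := Ioi 0))
    apply ht.frequently
    apply Eventually.frequently
    filter_upwards [Ioo_mem_nhdsGT (zero_lt_one)] with t ht
    rw [openSegment_eq_image']
    exact ⟨t, ht, rfl⟩
  have h2 := hfr.and_eventually (good_of_two h)
  obtain ⟨z0, hz0, hg0⟩ := h2.exists
  obtain ⟨n, hn⟩ := good_edge hm hz0
  have key := hg0 n hn
  have hall : ∃ᶠ z in 𝓝 (P.p i), P.Good z n := by
    refine h2.mono ?_
    rintro z ⟨hz, hg⟩
    obtain ⟨n', hn'⟩ := good_edge hm hz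
    have : n' = n := by
      have : (n' : ℝ) = n := by
        rcases key with k | k <;> rcases hg n' hn' with k' | k' <;> linarith [k.1, k.2, k'.1, k'.2]
      exact_mod_cast this
    rwa [← this]
  refine ⟨n, ?_, ?_, ?_⟩
  · filter_upwards [h] with X hX hb
    rcases key with k | k <;> rcases hX hb with h' | h' <;> rw [h']
    · exact Or.inl k.1
    · exact Or.inr k.2
    · exact Or.inr k.1
    · exact Or.inl k.2
  · exact frequently_frequently_nhds.1 (hall.mono (fun z hz => hz.2.1))
  · exact frequently_frequently_nhds.1 (hall.mono (fun z hz => hz.2.2))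

end SimplePolygon
end

section
open Set

open Filter Topology

lemma exists_smul_of_cross {u x : Pt} (hu : u ≠ 0) (h : cross u x = 0) : ∃ l : ℝ, x = l • u := by
  have hL : 0 < u.1^2 + u.2^2 := by
    by_contra hn
    apply hu
    apply Prod.ext
    · change u.1 = 0; nlinarith [sq_nonneg u.1, sq_nonneg u.2]
    · change u.2 = 0; nlinarith [sq_nonneg u.1, sq_nonneg u.2]
  unfold cross at h
  refine ⟨(u.1 * x.1 + u.2 * x.2) / (u.1^2 + u.2^2), ?_⟩
  apply Prod.ext
  · simp only [Prod.smul_fst, smul_eq_mul]; field_simp; linear_combination (-u.2) * h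
  · simp only [Prod.smul_snd, smul_eq_mul]; field_simp; linear_combination (u.1) * h

lemma onray {v u X : Pt} {l : ℝ} (h : X - v = l • u) (hl : 0 ≤ l) (hn : ‖X - v‖ < ‖u‖) :
    X ∈ segment ℝ v (v + u) := by
  have hl1 : l ≤ 1 := by
    by_contra h1
    push Not at h1
    rw [h, norm_smul, Real.norm_eq_abs, abs_of_nonneg hl] at hn
    nlinarith [norm_nonneg u]
  rw [segment_eq_image']
  refine ⟨l, ⟨hl, hl1⟩, ?_⟩
  simp only [add_sub_cancel_left]
  rw [← h]; simp

lemma convex_half (u v : Pt) : Convex ℝ {X : Pt | cross u (X - v) < 0} := by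
  have h1 : IsLinearMap ℝ (fun X : Pt => cross u X) := by
    constructor
    · intro x y; simp [cross]; ring
    · intro c x; simp [cross]; ring
  have h2 := convex_halfSpace_lt h1 (cross u v)
  have h3 : {X : Pt | cross u (X - v) < 0} = {X : Pt | cross u X < cross u v} := by
    ext X
    simp only [mem_ofPred_eq, cross, Prod.fst_sub, Prod.snd_sub]
    constructor <;> intro h <;> linarith
  rw [h3]
  exact h2

lemma convex_half' (u v : Pt) : Convex ℝ {X : Pt | 0 < cross u (X - v)} := by
  convert convex_half (-u) v using 1
  ext X
  simp only [mem_ofPred_eq, cross, Prod.fst_neg, Prod.snd_neg]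
  constructor <;> intro h <;> linarith

lemma cross_seg {v w u X : Pt} (h : X ∈ segment ℝ v (v + u)) :
    ∃ l : ℝ, 0 ≤ l ∧ cross w (X - v) = l * cross w u := by
  rw [segment_eq_image'] at h
  obtain ⟨l, hl, rfl⟩ := h
  exact ⟨l, hl.1, by simp [cross]; ring⟩

lemma cross_anti (u w : Pt) : cross u w = - cross w u := by unfold cross; ring

lemma sector (f : Pt → ℝ) (D : Set Pt) (v u t : Pt)
    (hf : ∀ C : Set Pt, Convex ℝ C → (∀ X ∈ C, X ∉ D) → ∀ x ∈ C, ∀ y ∈ C, f x = f y)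
    (hu : u ≠ 0) (ht : t ≠ 0) (δ : ℝ) (hδ : 0 < δ)
    (hD : ∀ X ∈ Metric.ball v δ, X ∈ D ↔ X ∈ segment ℝ v (v + u) ∨ X ∈ segment ℝ v (v + t))
    (h : 0 < cross u t ∨ (cross u t = 0 ∧ dotp u t < 0)) :
    ∃ α β : ℝ, ∀ᶠ X in 𝓝 v, X ∉ D → f X = α ∨ f X = β := by
  have hf' : ∀ C : Set Pt, Convex ℝ C → (∀ X ∈ C, X ∉ D) → ∃ α, ∀ x ∈ C, f x = α := by
    intro C h1 h2
    rcases C.eq_empty_or_nonempty with rfl | ⟨x0, hx0⟩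
    · exact ⟨0, by simp⟩
    · exact ⟨f x0, fun x hx => hf C h1 h2 x hx x0 hx0⟩
  have hsmall : ∀ w : Pt, w ≠ 0 → ∀ᶠ X in 𝓝 v, ‖X - v‖ < ‖w‖ := by
    intro w hw
    have : ContinuousAt (fun X : Pt => ‖X - v‖) v := by fun_prop
    apply this.eventually_lt continuousAt_const
    simpa using hw
  have hb := convex_ball v δ
  have huu : cross u u = 0 := by unfold cross; ring
  have htt : cross t t = 0 := by unfold cross; ring
  have htu := cross_anti t u
  rcases h with h | ⟨h, hd⟩
  · obtain ⟨α, hα⟩ := hf' (Metric.ball v δ ∩ ({X | 0 < cross u (X - v)} ∩ {X | cross t (X - v) < 0}))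
      (hb.inter ((convex_half' _ _).inter (convex_half _ _))) (by
        rintro X ⟨hX, h1, h2⟩ hXD
        rcases (hD X hX).1 hXD with h3 | h3
        · obtain ⟨l, hl, e⟩ := cross_seg (w := u) h3
          rw [mem_ofPred_eq, e, huu] at h1; simp at h1
        · obtain ⟨l, hl, e⟩ := cross_seg (w := t) h3
          rw [mem_ofPred_eq, e, htt] at h2; simp at h2)
    obtain ⟨β1, hβ1⟩ := hf' (Metric.ball v δ ∩ {X | cross u (X - v) < 0})
      (hb.inter (convex_half _ _)) (by
        rintro X ⟨hX, h1⟩ hXD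
        rcases (hD X hX).1 hXD with h3 | h3
        · obtain ⟨l, hl, e⟩ := cross_seg (w := u) h3
          rw [mem_ofPred_eq, e, huu] at h1; simp at h1
        · obtain ⟨l, hl, e⟩ := cross_seg (w := u) h3
          rw [mem_ofPred_eq, e] at h1; nlinarith)
    obtain ⟨β2, hβ2⟩ := hf' (Metric.ball v δ ∩ {X | 0 < cross t (X - v)})
      (hb.inter (convex_half' _ _)) (by
        rintro X ⟨hX, h1⟩ hXD
        rcases (hD X hX).1 hXD with h3 | h3
        · obtain ⟨l, hl, e⟩ := cross_seg (w := t) h3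
          rw [mem_ofPred_eq, e, htu] at h1; nlinarith
        · obtain ⟨l, hl, e⟩ := cross_seg (w := t) h3
          rw [mem_ofPred_eq, e, htt] at h1; simp at h1)
    have hββ : β1 = β2 := by
      have hcont : Tendsto (fun e : ℝ => v - e • (u + t)) (𝓝[>] 0) (𝓝 v) := by
        have : Continuous (fun e : ℝ => v - e • (u + t)) := by fun_prop
        simpa using (this.tendsto 0).mono_left (nhdsWithin_le_nhds (s := Ioi 0))
      obtain ⟨e, he1, he2⟩ := ((hcont.eventually (Metric.ball_mem_nhds v hδ)).and
        self_mem_nhdsWithin).exists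
      have he2 : 0 < e := he2
      have e1 : cross u (v - e • (u + t) - v) = - (e * cross u t) := by simp [cross]; ring
      have e2 : cross t (v - e • (u + t) - v) = e * cross u t := by simp [cross]; ring
      rw [← hβ1 _ ⟨he1, by rw [mem_ofPred_eq, e1]; nlinarith [mul_pos he2 h]⟩, ← hβ2 _ ⟨he1, by rw [mem_ofPred_eq, e2]; nlinarith [mul_pos he2 h]⟩]
    refine ⟨α, β1, ?_⟩
    filter_upwards [Metric.ball_mem_nhds v hδ, hsmall u hu, hsmall t ht] with X hX hXu hXt hXD
    by_cases c1 : cross u (X - v) < 0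
    · exact Or.inr (hβ1 X ⟨hX, c1⟩)
    by_cases c2 : 0 < cross t (X - v)
    · rw [hββ]; exact Or.inr (hβ2 X ⟨hX, c2⟩)
    by_cases c3 : cross u (X - v) = 0
    · exfalso
      obtain ⟨l, hl⟩ := exists_smul_of_cross hu c3
      apply hXD
      rw [hD X hX]
      left
      refine onray hl ?_ hXu
      have : cross t (X - v) = - (l * cross u t) := by rw [hl]; simp [cross]; ring
      rw [this] at c2
      by_contra hneg
      push Not at hneg
      nlinarith
    by_cases c4 : cross t (X - v) = 0
    · exfalso
      obtain ⟨l, hl⟩ := exists_smul_of_cross ht c4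
      apply hXD
      rw [hD X hX]
      right
      refine onray hl ?_ hXt
      have : cross u (X - v) = l * cross u t := by rw [hl]; simp [cross]; ring
      rw [this] at c1
      by_contra hneg
      push Not at hneg
      nlinarith
    left
    exact hα X ⟨hX, lt_of_le_of_ne (not_lt.1 c1) (Ne.symm c3), lt_of_le_of_ne (not_lt.1 c2) c4⟩
  · obtain ⟨μ, hμ⟩ := exists_smul_of_cross hu h
    have hμ0 : μ < 0 := by
      by_contra hn
      push Not at hn
      rw [hμ] at hd
      simp [dotp] at hd
      nlinarith [mul_nonneg hn (sq_nonneg u.1), mul_nonneg hn (sq_nonneg u.2)]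
    obtain ⟨α, hα⟩ := hf' (Metric.ball v δ ∩ {X | 0 < cross u (X - v)})
      (hb.inter (convex_half' _ _)) (by
        rintro X ⟨hX, h1⟩ hXD
        rcases (hD X hX).1 hXD with h3 | h3
        · obtain ⟨l, hl, e⟩ := cross_seg (w := u) h3
          rw [mem_ofPred_eq, e, huu] at h1; simp at h1
        · obtain ⟨l, hl, e⟩ := cross_seg (w := u) h3
          rw [mem_ofPred_eq, e, h] at h1; simp at h1)
    obtain ⟨β, hβ⟩ := hf' (Metric.ball v δ ∩ {X | cross u (X - v) < 0})
      (hb.inter (convex_half _ _)) (by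
        rintro X ⟨hX, h1⟩ hXD
        rcases (hD X hX).1 hXD with h3 | h3
        · obtain ⟨l, hl, e⟩ := cross_seg (w := u) h3
          rw [mem_ofPred_eq, e, huu] at h1; simp at h1
        · obtain ⟨l, hl, e⟩ := cross_seg (w := u) h3
          rw [mem_ofPred_eq, e, h] at h1; simp at h1)
    refine ⟨α, β, ?_⟩
    filter_upwards [Metric.ball_mem_nhds v hδ, hsmall u hu, hsmall t ht] with X hX hXu hXt hXD
    rcases lt_trichotomy (cross u (X - v)) 0 with c | c | c
    · exact Or.inr (hβ X ⟨hX, c⟩)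
    · exfalso
      obtain ⟨l, hl⟩ := exists_smul_of_cross hu c
      apply hXD
      rw [hD X hX]
      by_cases hl0 : 0 ≤ l
      · exact Or.inl (onray hl hl0 hXu)
      · right
        refine onray (l := l / μ) ?_ ?_ hXt
        · rw [hl, hμ, smul_smul, div_mul_cancel₀ _ hμ0.ne]
        · exact div_nonneg_of_nonpos (not_le.1 hl0).le hμ0.le
    · exact Or.inl (hα X ⟨hX, c⟩)

namespace SimplePolygon
variable {m : ℕ} [NeZero m] {P : SimplePolygon m}

lemma vertex_off (hm : 3 ≤ m) {i j : ZMod m} (h1 : j ≠ i) (h2 : j ≠ i + 1) :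
    P.p (i + 1) ∉ segment ℝ (P.p j) (P.p (j + 1)) := by
  intro h
  have hl := left_mem_segment ℝ (P.p (i + 1)) (P.p (i + 1 + 1))
  by_cases h3 : i + 1 + 1 = j
  · subst h3
    have : P.p (i + 1) ∈ ({P.p (i + 1 + 1)} : Set Pt) := by rw [← P.consec (i + 1)]; exact ⟨hl, h⟩
    exact P.p_ne hm (i + 1) this
  have : P.p (i + 1) ∈ (∅ : Set Pt) := by
    rw [← P.disj (i + 1) j (Ne.symm h2) h3 (fun h => h1 (add_right_cancel h))]
    exact ⟨hl, h⟩
  exact this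

lemma consec_dir (hm : 3 ≤ m) (i : ZMod m) (h0 : cross (P.p i - P.p (i + 1)) (P.p (i + 1 + 1) - P.p (i + 1)) = 0) :
    dotp (P.p i - P.p (i + 1)) (P.p (i + 1 + 1) - P.p (i + 1)) < 0 := by
  set v := P.p (i + 1) with hv
  have hu : P.p i - v ≠ 0 := sub_ne_zero.2 (P.p_ne hm i)
  have ht : P.p (i + 1 + 1) - v ≠ 0 := sub_ne_zero.2 (P.p_ne hm (i + 1)).symm
  obtain ⟨μ, hμ⟩ := exists_smul_of_cross hu h0
  have hμ0 : μ ≠ 0 := by rintro rfl; simp at hμ; exact ht hμ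
  have hneg : μ < 0 := by
    by_contra hn
    have hpos : 0 < μ := lt_of_le_of_ne (not_lt.1 hn) hμ0.symm
    have hc := P.consec i
    rw [← hv] at hc
    by_cases h1 : μ ≤ 1
    · have : P.p (i + 1 + 1) ∈ ({v} : Set Pt) := by
        rw [← hc]
        refine ⟨?_, right_mem_segment _ _ _⟩
        rw [segment_symm, segment_eq_image']
        refine ⟨μ, ⟨hpos.le, h1⟩, ?_⟩
        simp only
        rw [← hμ]; simp
      exact ht (sub_eq_zero.2 this)
    · have : P.p i ∈ ({v} : Set Pt) := by
        rw [← hc]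
        refine ⟨left_mem_segment _ _ _, ?_⟩
        rw [segment_eq_image']
        refine ⟨μ⁻¹, ⟨by positivity, inv_le_one_of_one_le₀ (not_le.1 h1).le⟩, ?_⟩
        simp only
        rw [hμ, smul_smul, inv_mul_cancel₀ hμ0]; simp
      exact hu (sub_eq_zero.2 this)
  rw [hμ]
  have hL : 0 < (P.p i - v).1^2 + (P.p i - v).2^2 := by
    by_contra hn
    apply hu
    apply Prod.ext
    · change (P.p i - v).1 = 0; nlinarith [sq_nonneg (P.p i - v).1, sq_nonneg (P.p i - v).2]
    · change (P.p i - v).2 = 0; nlinarith [sq_nonneg (P.p i - v).1, sq_nonneg (P.p i - v).2]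
  have := mul_neg_of_neg_of_pos hneg hL
  simp only [dotp, Prod.smul_fst, Prod.smul_snd, smul_eq_mul]
  nlinarith

lemma ball_vertex (hm : 3 ≤ m) (i : ZMod m) : ∃ δ > 0, ∀ X ∈ Metric.ball (P.p (i + 1)) δ,
    X ∈ P.boundary ↔ X ∈ segment ℝ (P.p i) (P.p (i + 1)) ∨
      X ∈ segment ℝ (P.p (i + 1)) (P.p (i + 1 + 1)) := by
  have h := ev_avoid (P := P) (z := P.p (i + 1)) {j | j ≠ i ∧ j ≠ i + 1}
    (fun j hj => vertex_off hm hj.1 hj.2)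
  obtain ⟨δ, hδ, hb⟩ := Metric.eventually_nhds_iff_ball.1 h
  refine ⟨δ, hδ, fun X hX => ⟨fun hB => ?_, ?_⟩⟩
  · obtain ⟨j, hj⟩ := mem_iUnion.1 hB
    by_cases h1 : j = i
    · subst h1; exact Or.inl hj
    by_cases h2 : j = i + 1
    · subst h2; exact Or.inr hj
    exact absurd hj (hb X hX j ⟨h1, h2⟩)
  · rintro (h | h)
    · exact mem_iUnion.2 ⟨_, h⟩
    · exact mem_iUnion.2 ⟨_, h⟩

lemma two_values (hm : 3 ≤ m) (i : ZMod m) : ∃ α β : ℝ, ∀ᶠ X in 𝓝 (P.p (i + 1)),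
    X ∉ P.boundary → P.wind X = α ∨ P.wind X = β := by
  obtain ⟨δ, hδ, hb⟩ := ball_vertex (P := P) hm i
  have hu : P.p i - P.p (i + 1) ≠ 0 := sub_ne_zero.2 (P.p_ne hm i)
  have ht : P.p (i + 1 + 1) - P.p (i + 1) ≠ 0 := sub_ne_zero.2 (P.p_ne hm (i + 1)).symm
  have hf : ∀ C : Set Pt, Convex ℝ C → (∀ X ∈ C, X ∉ P.boundary) → ∀ x ∈ C, ∀ y ∈ C,
    P.wind x = P.wind y := fun C h1 h2 x hx y hy => wind_const h1.isPreconnected h2 hx hy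
  rcases lt_trichotomy (cross (P.p i - P.p (i + 1)) (P.p (i + 1 + 1) - P.p (i + 1))) 0 with h | h | h
  · refine sector P.wind P.boundary (P.p (i + 1)) _ _ hf ht hu δ hδ ?_ (Or.inl (by rw [cross_anti]; linarith))
    intro X hX
    rw [hb X hX, add_sub_cancel, add_sub_cancel, or_comm, segment_symm ℝ (P.p i)]
  · refine sector P.wind P.boundary (P.p (i + 1)) _ _ hf hu ht δ hδ ?_ (Or.inr ⟨h, consec_dir hm i h⟩)
    intro X hX
    rw [hb X hX, add_sub_cancel, add_sub_cancel, segment_symm ℝ (P.p i)]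
  · refine sector P.wind P.boundary (P.p (i + 1)) _ _ hf hu ht δ hδ ?_ (Or.inl h)
    intro X hX
    rw [hb X hX, add_sub_cancel, add_sub_cancel, segment_symm ℝ (P.p i)]

lemma good_vertex' (hm : 3 ≤ m) (i : ZMod m) : ∃ n, P.Good (P.p i) n := by
  obtain ⟨α, β, h⟩ := two_values (P := P) hm (i - 1)
  rw [sub_add_cancel] at h
  exact good_vertex hm h

lemma good_all (hm : 3 ≤ m) (P : SimplePolygon m) {z : Pt} (hz : z ∈ P.boundary) : ∃ n, P.Good z n := by
  obtain ⟨i, hi⟩ := mem_iUnion.1 hz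
  rw [edge, ← insert_endpoints_openSegment] at hi
  rcases hi with rfl | rfl | hi
  · exact good_vertex' hm i
  · exact good_vertex' hm _
  · exact good_edge hm hi

lemma good_const (hm : 3 ≤ m) (P : SimplePolygon m) : ∃ n, ∀ z ∈ P.boundary, P.Good z n := by
  have : ∀ z : Pt, ∃ n, z ∈ P.boundary → P.Good z n := by
    intro z
    by_cases hz : z ∈ P.boundary
    · obtain ⟨n, hn⟩ := good_all hm P hz; exact ⟨n, fun _ => hn⟩
    · exact ⟨0, fun h => absurd h hz⟩
  choose K hK using this
  have hseg : ∀ i, ∀ z ∈ P.edge i, K z = K (P.p i) := by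
    intro i z hz
    have hsub : P.edge i ⊆ P.boundary := subset_iUnion _ i
    have hpre : IsPreconnected (P.edge i) := (convex_segment _ _).isPreconnected
    refine hpre.constant (f := K) ?_ hz (left_mem_segment _ _ _)
    intro x hx
    have h1 := good_unique (hK x (hsub hx))
    have h2 : K =ᶠ[𝓝[P.edge i] x] fun _ => K x := by
      filter_upwards [nhdsWithin_le_nhds h1, self_mem_nhdsWithin] with y hy hy'
      exact hy _ (hK y (hsub hy'))
    exact (tendsto_const_nhds).congr' h2.symm
  have hv : ∀ n : ℕ, K (P.p (n : ZMod m)) = K (P.p 0) := by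
    intro n
    induction n with
    | zero => simp
    | succ n ih =>
      rw [← ih, ← hseg n (P.p ((n + 1 : ℕ) : ZMod m))]
      push_cast
      exact right_mem_segment _ _ _
  refine ⟨K (P.p 0), fun z hz => ?_⟩
  obtain ⟨i, hi⟩ := mem_iUnion.1 hz
  have h1 := hseg i z hi
  have h2 := hv i.val
  rw [ZMod.natCast_zmod_val] at h2
  rw [← h2, ← h1]
  exact hK z hz

theorem structure_thm (hm : 3 ≤ m) (P : SimplePolygon m) : ∃ k : ℤ, (k = 0 ∨ k = -1) ∧
    (∀ X, X ∉ P.boundary → P.wind X = k ∨ P.wind X = k + 1) ∧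
    ∀ i, ∀ z ∈ openSegment ℝ (P.p i) (P.p (i + 1)), ∀ᶠ X in 𝓝 z,
      (0 < P.side i X → X ∉ P.boundary ∧ P.wind X = k + 1) ∧
      (P.side i X < 0 → X ∉ P.boundary ∧ P.wind X = k) := by
  obtain ⟨k, hk⟩ := good_const hm P
  have hval : ∀ X, X ∉ P.boundary → P.wind X = k ∨ P.wind X = k + 1 := by
    intro X hX
    have hne : P.boundary.Nonempty := ⟨P.p 0, mem_iUnion.2 ⟨0, left_mem_segment _ _ _⟩⟩
    obtain ⟨z, hz, hd⟩ := P.isCompact_boundary.exists_infDist_eq_dist hne X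
    have hball : ∀ Y ∈ Metric.ball X (dist X z), Y ∉ P.boundary := by
      intro Y hY hYb
      have := Metric.infDist_le_dist_of_mem (x := X) hYb
      rw [Metric.mem_ball, dist_comm] at hY
      linarith
    have hXz : 0 < dist X z := dist_pos.2 (by rintro rfl; exact hX hz)
    have hfr : ∃ᶠ Y in 𝓝 z, Y ∈ Metric.ball X (dist X z) := by
      rw [← mem_closure_iff_frequently, closure_ball _ hXz.ne']
      rw [Metric.mem_closedBall, dist_comm]
    obtain ⟨Y, hY, hY'⟩ := (hfr.and_eventually (hk z hz).1).exists
    rw [wind_const (convex_ball X (dist X z)).isPreconnected hball (Metric.mem_ball_self hXz) hY]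
    exact hY' (hball Y hY)
  refine ⟨k, ?_, hval, ?_⟩
  · obtain ⟨R, hR⟩ := P.wind_far
    have hX := hR (|R| + 1, 0) (by
      rw [Prod.norm_def]
      refine lt_of_lt_of_le ?_ (le_max_left _ _)
      rw [Real.norm_eq_abs]
      exact lt_of_lt_of_le (by linarith [le_abs_self R]) (le_abs_self _))
    have h2 := hval _ hX.1
    rw [hX.2] at h2
    rcases h2 with h2 | h2
    · left; exact_mod_cast h2.symm
    · right
      have : k + 1 = 0 := by exact_mod_cast h2.symm
      omega
  · intro i z hz
    obtain ⟨n, hn⟩ := jump hm hz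
    have : n = k := by
      obtain ⟨X, hX1, hX2⟩ := ((freq_side hm hz).1.and_eventually hn).exists
      obtain ⟨Y, hY1, hY2⟩ := ((freq_side hm hz).2.and_eventually hn).exists
      have hx := hX2.1 hX1
      have hy := hY2.2.1 hY1
      have hx' := hval X hx.1
      have hy' := hval Y hy.1
      rw [hx.2] at hx'
      rw [hy.2] at hy'
      have : (n : ℝ) = k := by
        rcases hx' with h | h <;> rcases hy' with h' | h' <;> linarith
      exact_mod_cast this
    subst this
    filter_upwards [hn] with X hX
    exact ⟨hX.1, hX.2.1⟩

end SimplePolygon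
end

section
open Set

open Filter Topology MeasureTheory

def crR (R : ℝ) (a b X : Pt) : ℝ := if -R < X.2 then (cr a b X : ℝ) else 0

lemma crR_anti (R : ℝ) (a b X : Pt) : crR R a b X = - crR R b a X := by
  unfold crR
  by_cases h : -R < X.2
  · rw [if_pos h, if_pos h]
    unfold cr
    rw [cross_anti (a - X)]
    by_cases h1 : b.1 < X.1 ∧ X.1 < a.1 ∧ 0 < - cross (b - X) (a - X)
    · have h2 : ¬ (a.1 < X.1 ∧ X.1 < b.1 ∧ 0 < cross (b - X) (a - X)) := by intro h; linarith [h1.1, h.2.1]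
      have h3 : (b.1 < X.1 ∧ X.1 < a.1 ∧ cross (b - X) (a - X) < 0) := ⟨h1.1, h1.2.1, by linarith [h1.2.2]⟩
      rw [if_pos h1, if_neg h2, if_pos h3]; simp
    · have h3 : ¬ (b.1 < X.1 ∧ X.1 < a.1 ∧ cross (b - X) (a - X) < 0) := fun h => h1 ⟨h.1, h.2.1, by linarith [h.2.2]⟩
      rw [if_neg h1, if_neg h3]
      by_cases h2 : a.1 < X.1 ∧ X.1 < b.1 ∧ 0 < cross (b - X) (a - X)
      · rw [if_pos h2, if_pos ⟨h2.1, h2.2.1, by linarith [h2.2.2]⟩]; simp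
      · rw [if_neg h2, if_neg (fun h => h2 ⟨h.1, h.2.1, by linarith [h.2.2]⟩)]; simp
  · rw [if_neg h, if_neg h]; simp

def lin (a b : Pt) (x : ℝ) : ℝ := a.2 + (x - a.1) * ((b.2 - a.2) / (b.1 - a.1))

lemma crR_lt {R : ℝ} {a b : Pt} (h : a.1 < b.1) :
    crR R a b = - (regionBetween (fun _ => -R) (lin a b) (Ioo a.1 b.1)).indicator 1 := by
  have hd : 0 < b.1 - a.1 := sub_pos.2 h
  funext X
  have hc : cross (a - X) (b - X) = (b.1 - a.1) * (X.2 - lin a b X.1) := by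
    unfold lin; simp only [cross, Prod.fst_sub, Prod.snd_sub]; field_simp; ring
  have h1 : ¬ (b.1 < X.1 ∧ X.1 < a.1 ∧ 0 < cross (a - X) (b - X)) := by intro h; linarith [h.1, h.2.1]
  have h2 : cross (a - X) (b - X) < 0 ↔ X.2 < lin a b X.1 := by
    rw [hc]; constructor
    · intro h; by_contra hn; nlinarith
    · intro h; nlinarith
  unfold crR cr
  rw [if_neg h1]
  simp only [Pi.neg_apply]
  by_cases h3 : X ∈ regionBetween (fun _ => -R) (lin a b) (Ioo a.1 b.1)
  · rw [indicator_of_mem h3]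
    obtain ⟨⟨h4, h5⟩, h6, h7⟩ := h3
    rw [if_pos h6, if_pos ⟨h4, h5, h2.2 h7⟩]; simp
  · rw [indicator_of_notMem h3]
    by_cases h4 : -R < X.2
    · rw [if_pos h4, if_neg (fun h => h3 ⟨⟨h.1, h.2.1⟩, h4, h2.1 h.2.2⟩)]; simp
    · rw [if_neg h4]; simp

lemma crR_int_lt {R : ℝ} {a b : Pt} (h : a.1 < b.1) (ha : -R < a.2) (hb : -R < b.2) :
    Integrable (crR R a b) ∧ ∫ X, crR R a b X = -((b.1 - a.1) * ((a.2 + b.2) / 2 + R)) := by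
  have hd : 0 < b.1 - a.1 := sub_pos.2 h
  have hcl : Continuous (lin a b) := by unfold lin; fun_prop
  have hmeas : MeasurableSet (regionBetween (fun _ => -R) (lin a b) (Ioo a.1 b.1)) :=
    measurableSet_regionBetween measurable_const hcl.measurable measurableSet_Ioo
  have hle : ∀ x ∈ Ioo a.1 b.1, -R ≤ lin a b x := by
    intro x hx
    have : lin a b x = ((b.1 - x) * a.2 + (x - a.1) * b.2) / (b.1 - a.1) := by
      unfold lin; field_simp; ring
    rw [this, le_div_iff₀ hd]
    nlinarith [mul_pos (sub_pos.2 hx.2) (by linarith : 0 < a.2 + R), mul_pos (sub_pos.2 hx.1) (by linarith : 0 < b.2 + R)]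
  have hint : IntegrableOn (lin a b) (Ioo a.1 b.1) :=
    (hcl.integrableOn_Icc).mono_set Ioo_subset_Icc_self
  have hconst : IntegrableOn (fun _ : ℝ => -R) (Ioo a.1 b.1) :=
    ((continuous_const).integrableOn_Icc).mono_set Ioo_subset_Icc_self
  have hvol : volume (regionBetween (fun _ => -R) (lin a b) (Ioo a.1 b.1)) = _ :=
    volume_regionBetween_eq_integral hconst hint measurableSet_Ioo hle
  have hI : ∫ x in Ioo a.1 b.1, (lin a b - fun _ => -R : ℝ → ℝ) x = (b.1 - a.1) * ((a.2 + b.2) / 2 + R) := by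
    rw [← integral_Ioc_eq_integral_Ioo, ← intervalIntegral.integral_of_le h.le]
    have hder : ∀ x ∈ uIcc a.1 b.1, HasDerivAt (fun x => (a.2 + R) * x + (x - a.1)^2 / 2 * ((b.2 - a.2) / (b.1 - a.1)))
        ((lin a b - fun _ => -R : ℝ → ℝ) x) x := by
      intro x _
      have h1 := ((hasDerivAt_id x).const_mul (a.2 + R)).add
        (((((hasDerivAt_id x).sub_const a.1).pow 2).div_const 2).mul_const ((b.2 - a.2) / (b.1 - a.1)))
      refine (h1.congr_deriv ?_)
      simp only [lin, Pi.sub_apply, id]; push_cast; ring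
    rw [intervalIntegral.integral_eq_sub_of_hasDerivAt hder (by
      apply Continuous.intervalIntegrable
      exact hcl.sub continuous_const)]
    field_simp
    ring
  rw [crR_lt h]
  constructor
  · apply Integrable.neg
    rw [integrable_indicator_iff hmeas]
    rw [Pi.one_def, integrableOn_const_iff]
    right
    rw [hvol]; exact ENNReal.ofReal_lt_top
  · simp only [Pi.neg_apply]
    rw [integral_neg, integral_indicator_one hmeas, Measure.real, hvol, hI, ENNReal.toReal_ofReal]
    have : 0 < a.2 + b.2 + 2 * R := by linarith
    have h2 : (a.2 + b.2) / 2 + R = (a.2 + b.2 + 2 * R) / 2 := by ring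
    rw [h2]; positivity

lemma crR_int {R : ℝ} {a b : Pt} (ha : -R < a.2) (hb : -R < b.2) :
    Integrable (crR R a b) ∧ ∫ X, crR R a b X = -((b.1 - a.1) * ((a.2 + b.2) / 2 + R)) := by
  rcases lt_trichotomy a.1 b.1 with h | h | h
  · exact crR_int_lt h ha hb
  · have : crR R a b = fun _ => 0 := by
      funext X
      have h0 : cr a b X = 0 := by
        unfold cr
        rw [if_neg (fun h' => by linarith [h'.1, h'.2.1]), if_neg (fun h' => by linarith [h'.1, h'.2.1])]
      unfold crR; rw [h0]; simp
    rw [this]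
    refine ⟨integrable_zero _ _ _, ?_⟩
    simp [h]
  · have h1 := crR_int_lt h hb ha
    have h2 : crR R a b = - crR R b a := by funext X; exact crR_anti R a b X
    rw [h2]
    refine ⟨h1.1.neg, ?_⟩
    simp only [Pi.neg_apply]
    rw [integral_neg, h1.2]; ring

lemma null_line (α β γ : ℝ) (h : α ≠ 0 ∨ β ≠ 0) : volume {X : Pt | α * X.1 + β * X.2 = γ} = 0 := by
  have hc : IsClosed {X : Pt | α * X.1 + β * X.2 = γ} :=
    isClosed_eq (by fun_prop) (by fun_prop)
  have hms := hc.measurableSet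
  rw [Measure.volume_eq_prod]
  by_cases hβ : β = 0
  · have hα : α ≠ 0 := h.resolve_right (by simp [hβ])
    rw [Measure.measure_prod_null hms]
    have : ∀ᵐ x : ℝ, x ≠ γ / α := by
      rw [ae_iff]; simp
    filter_upwards [this] with x hx
    have : Prod.mk x ⁻¹' {X : Pt | α * X.1 + β * X.2 = γ} = ∅ := by
      ext y
      simp only [mem_preimage, mem_ofPred_eq, mem_empty_iff_false, iff_false]
      rw [hβ]; intro h'; apply hx; field_simp; linarith
    rw [this]; simp
  · rw [Measure.measure_prod_null hms]
    refine Eventually.of_forall (fun x => ?_)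
    have : Prod.mk x ⁻¹' {X : Pt | α * X.1 + β * X.2 = γ} ⊆ {(γ - α * x) / β} := by
      intro y hy
      simp only [mem_preimage, mem_ofPred_eq] at hy
      rw [mem_singleton_iff]; field_simp; linarith
    exact measure_mono_null this (by simp)

namespace SimplePolygon
variable {m : ℕ} [NeZero m] {P : SimplePolygon m}

lemma null_boundary (hm : 3 ≤ m) (P : SimplePolygon m) : volume P.boundary = 0 := by
  unfold boundary
  rw [measure_iUnion_null_iff]
  intro i
  have hne := P.p_ne hm i
  refine measure_mono_null ?_ (null_line (-((P.p (i+1)).2 - (P.p i).2)) ((P.p (i+1)).1 - (P.p i).1)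
    (-((P.p (i+1)).2 - (P.p i).2) * (P.p i).1 + ((P.p (i+1)).1 - (P.p i).1) * (P.p i).2) ?_)
  · intro X hX
    have := side_eq_zero hX
    rw [side_eq] at this
    simp only [cross, Prod.fst_sub, Prod.snd_sub] at this
    simp only [mem_ofPred_eq]; linarith
  · by_contra hn
    push Not at hn
    apply hne
    apply Prod.ext <;> linarith [hn.1, hn.2]

lemma signedArea_eq (P : SimplePolygon m) : P.signedArea =
    (1 / 2) * ∑ i : ZMod m, ((P.p i).1 * (P.p (i + 1)).2 - (P.p (i + 1)).1 * (P.p i).2) := by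
  unfold signedArea
  congr 1
  symm
  refine Finset.sum_bij' (fun i _ => i.val) (fun n _ => (n : ZMod m)) ?_ ?_ ?_ ?_ ?_
  · intro i _; simp [ZMod.val_lt]
  · intro n _; simp
  · intro i _; simp
  · intro n hn; exact ZMod.val_natCast_of_lt (Finset.mem_range.1 hn)
  · intro i _; simp

lemma wind_eq_cr {X : Pt} (h : X ∉ P.boundary) (hv : ∀ i, (P.p i).1 ≠ X.1) :
    P.wind X = ∑ i, (cr (P.p i) (P.p (i + 1)) X : ℝ) := by
  have hpi := Real.pi_pos
  rw [wind, Finset.sum_congr rfl (fun i _ => ang_cr (hv i) (hv (i + 1)) (not_mem_edge h i)),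
    Finset.sum_add_distrib, Finset.sum_sub_distrib, sum_shift (fun i => phi (P.p i) X), sub_self,
    ← Finset.mul_sum]
  field_simp
  ring

lemma area_int (hm : 3 ≤ m) (P : SimplePolygon m) (R : ℝ) (hR : ∀ i, -R < (P.p i).2) :
    ∃ F : Pt → ℝ, Integrable F ∧ ∫ X, F X = P.signedArea ∧
      ∀ᵐ X, X ∉ P.boundary ∧ F X = if -R < X.2 then P.wind X else 0 := by
  refine ⟨fun X => ∑ i, crR R (P.p i) (P.p (i + 1)) X, ?_, ?_, ?_⟩
  · exact integrable_finsetSum _ (fun i _ => (crR_int (hR i) (hR (i + 1))).1)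
  · rw [integral_finsetSum _ (fun i _ => (crR_int (hR i) (hR (i + 1))).1),
      Finset.sum_congr rfl (fun i _ => (crR_int (hR i) (hR (i + 1))).2), signedArea_eq, Finset.mul_sum]
    rw [← sub_eq_zero, ← Finset.sum_sub_distrib]
    have h1 := sum_shift (fun i => (P.p i).1 * (P.p i).2 / 2 + R * (P.p i).1)
    rw [← sub_eq_zero, ← Finset.sum_sub_distrib] at h1
    rw [← neg_eq_zero, ← Finset.sum_neg_distrib, ← h1]
    apply Finset.sum_congr rfl
    intro i _
    ring
  · have h1 : ∀ᵐ X : Pt, X ∉ P.boundary := by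
      rw [ae_iff]; simpa using null_boundary hm P
    have h2 : ∀ᵐ X : Pt, ∀ i, (P.p i).1 ≠ X.1 := by
      rw [ae_all_iff]
      intro i
      rw [ae_iff]
      refine measure_mono_null ?_ (null_line 1 0 (P.p i).1 (Or.inl one_ne_zero))
      intro X hX
      simp only [mem_ofPred_eq, not_not] at hX ⊢
      linarith
    filter_upwards [h1, h2] with X h1 h2
    refine ⟨h1, ?_⟩
    by_cases h : -R < X.2
    · rw [if_pos h, wind_eq_cr h1 h2]
      apply Finset.sum_congr rfl
      intro i _
      unfold crR; rw [if_pos h]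
    · rw [if_neg h]
      apply Finset.sum_eq_zero
      intro i _
      unfold crR; rw [if_neg h]

lemma exists_R (P : SimplePolygon m) (Y : Pt) : ∃ R : ℝ, -R < Y.2 ∧ ∀ i, -R < (P.p i).2 := by
  obtain ⟨B, hB⟩ := (Set.finite_range (fun i => -(P.p i).2)).bddAbove
  refine ⟨max B (-Y.2) + 1, by linarith [le_max_right B (-Y.2)], fun i => ?_⟩
  have : -(P.p i).2 ≤ B := hB ⟨i, rfl⟩
  linarith [le_max_left B (-Y.2)]

lemma area_nonpos (hm : 3 ≤ m) (h : ∀ X, X ∉ P.boundary → P.wind X ≤ 0) : P.signedArea ≤ 0 := by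
  obtain ⟨R, _, hR⟩ := P.exists_R 0
  obtain ⟨F, hF, hI, hae⟩ := area_int hm P R hR
  rw [← hI]
  apply integral_nonpos_of_ae
  filter_upwards [hae] with X hX
  rw [hX.2]
  split_ifs
  · exact h X hX.1
  · exact le_rfl

lemma area_pos (hm : 3 ≤ m) (h : ∀ X, X ∉ P.boundary → 0 ≤ P.wind X) {Y : Pt} (hY : Y ∉ P.boundary)
    (hY1 : 0 < P.wind Y) : 0 < P.signedArea := by
  obtain ⟨R, hRY, hR⟩ := P.exists_R Y
  obtain ⟨F, hF, hI, hae⟩ := area_int hm P R hR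
  rw [← hI, integral_pos_iff_support_of_nonneg_ae ?_ hF]
  · have hev : ∀ᶠ X in 𝓝 Y, X ∉ P.boundary ∧ 0 < P.wind X ∧ -R < X.2 := by
      have h1 : ∀ᶠ X in 𝓝 Y, X ∉ P.boundary := P.isCompact_boundary.isClosed.isOpen_compl.mem_nhds hY
      have h2 : ∀ᶠ X in 𝓝 Y, 0 < P.wind X := (wind_contAt hY).eventually_const_lt hY1
      have h3 : ∀ᶠ X in 𝓝 Y, -R < X.2 :=
        (continuous_snd.continuousAt (x := Y)).eventually_const_lt hRY
      filter_upwards [h1, h2, h3] with X a b c using ⟨a, b, c⟩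
    obtain ⟨U, hU, hUo, hYU⟩ := eventually_nhds_iff.1 hev
    have hpos : 0 < volume U := hUo.measure_pos volume ⟨Y, hYU⟩
    refine lt_of_lt_of_le hpos ?_
    apply measure_mono_ae
    filter_upwards [hae] with X hX hXU
    have := hU X hXU
    show F X ≠ 0
    rw [hX.2, if_pos this.2.2]
    exact this.2.1.ne'
  · filter_upwards [hae] with X hX
    rw [hX.2]
    split_ifs
    · exact h X hX.1
    · exact le_rfl

theorem structure_thm' (hm : 3 ≤ m) (P : SimplePolygon m) : ∃ k : ℤ, (k = 0 ∨ k = -1) ∧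
    (P.PosOriented ↔ k = 0) ∧
    ∀ i, ∀ z ∈ openSegment ℝ (P.p i) (P.p (i + 1)), ∀ᶠ X in 𝓝 z,
      (0 < P.side i X → X ∉ P.boundary ∧ P.wind X = k + 1) ∧
      (P.side i X < 0 → X ∉ P.boundary ∧ P.wind X = k) := by
  obtain ⟨k, hk, hv, he⟩ := structure_thm hm P
  refine ⟨k, hk, ⟨fun hp => ?_, fun h0 => ?_⟩, he⟩
  · rcases hk with hk | hk
    · exact hk
    · exfalso
      have : P.signedArea ≤ 0 := by
        apply area_nonpos hm
        intro X hX
        rcases hv X hX with h | h <;> rw [h, hk] <;> norm_num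
      exact absurd hp (not_lt.2 this)
  · have hz : midpoint ℝ (P.p 0) (P.p (0 + 1)) ∈ openSegment ℝ (P.p 0) (P.p (0 + 1)) := midpoint_mem_openSegment _ _
    obtain ⟨Y, hY1, hY2⟩ := ((freq_side hm hz).1.and_eventually (he 0 _ hz)).exists
    have hY := hY2.1 hY1
    refine area_pos hm ?_ hY.1 (by rw [hY.2, h0]; norm_num)
    intro X hX
    rcases hv X hX with h | h <;> rw [h, h0] <;> norm_num

end SimplePolygon
end

section
open Set
open Filter Topology

lemma cross_smul_r (u w : Pt) (l : ℝ) : cross u (l • w) = l * cross u w := by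
  simp only [cross, Prod.smul_fst, Prod.smul_snd, smul_eq_mul]; ring
lemma cross_smul_l (u w : Pt) (l : ℝ) : cross (l • u) w = l * cross u w := by
  simp only [cross, Prod.smul_fst, Prod.smul_snd, smul_eq_mul]; ring
lemma cross_add_r (u w x : Pt) : cross u (w + x) = cross u w + cross u x := by
  simp only [cross, Prod.fst_add, Prod.snd_add]; ring
lemma cross_add_l (u w x : Pt) : cross (u + w) x = cross u x + cross w x := by
  simp only [cross, Prod.fst_add, Prod.snd_add]; ring
lemma cross_self' (u : Pt) : cross u u = 0 := by unfold cross; ring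

lemma eq_zero_of_cross {u w x : Pt} (h : cross u w ≠ 0) (h1 : cross u x = 0) (h2 : cross w x = 0) : x = 0 := by
  apply Prod.ext
  · have : x.1 * cross u w = 0 := by
      have e : x.1 * cross u w = w.1 * cross u x - u.1 * cross w x := by unfold cross; ring
      rw [e, h1, h2]; ring
    simpa [h] using this
  · have : x.2 * cross u w = 0 := by
      have e : x.2 * cross u w = w.2 * cross u x - u.2 * cross w x := by unfold cross; ring
      rw [e, h1, h2]; ring
    simpa [h] using this

namespace SimplePolygon
variable {m : ℕ} [NeZero m] {P : SimplePolygon m}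

lemma exists_dir (P : SimplePolygon m) (i : ZMod m) (hi : P.IsReflex i) :
    ∃ d : Pt, 0 < cross (P.p (i + 1) - P.p i) d ∧ 0 < cross (P.p i - P.p (i - 1)) d ∧
      ∀ n, P.p n ≠ P.p i → cross d (P.p n - P.p i) ≠ 0 := by
  unfold IsReflex at hi
  set r := P.p i
  set a := P.p (i - 1)
  set b := P.p (i + 1)
  have hfin := Set.finite_range (fun n => - cross (r - a) (P.p n - r) / cross (r - b) (P.p n - r))
  obtain ⟨t, ht0, ht⟩ := ((Ioi_infinite (0:ℝ)).sdiff hfin).nonempty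
  have ht0 : 0 < t := ht0
  refine ⟨(r - a) + t • (r - b), ?_, ?_, ?_⟩
  · have : cross (b - r) ((r - a) + t • (r - b)) = - cross (r - a) (b - r) := by
      simp only [cross, Prod.fst_add, Prod.snd_add, Prod.fst_sub, Prod.snd_sub, Prod.smul_fst, Prod.smul_snd, smul_eq_mul]; ring
    rw [this]; linarith
  · have : cross (r - a) ((r - a) + t • (r - b)) = t * (- cross (r - a) (b - r)) := by
      simp only [cross, Prod.fst_add, Prod.snd_add, Prod.fst_sub, Prod.snd_sub, Prod.smul_fst, Prod.smul_snd, smul_eq_mul]; ring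
    rw [this]; apply mul_pos ht0; linarith
  · intro n hn h0
    rw [cross_add_l, cross_smul_l] at h0
    have hx : P.p n - r ≠ 0 := sub_ne_zero.2 hn
    by_cases hB : cross (r - b) (P.p n - r) = 0
    · rw [hB] at h0
      refine hx (eq_zero_of_cross (u := r - a) (w := r - b) ?_ (by linarith) hB)
      have : cross (r - a) (r - b) = - cross (r - a) (b - r) := by
        simp only [cross, Prod.fst_sub, Prod.snd_sub]; ring
      rw [this]; linarith
    · apply ht
      refine ⟨n, ?_⟩
      simp only
      field_simp
      linarith

lemma near_reflex (hm : 3 ≤ m) (P : SimplePolygon m) (hor : P.PosOriented) (i : ZMod m) (hi : P.IsReflex i)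
    {d : Pt} (hd : 0 < cross (P.p (i + 1) - P.p i) d) :
    ∃ s0 : ℝ, 0 < s0 ∧ ∀ s : ℝ, 0 < s → s < s0 → P.p i + s • d ∉ P.boundary ∧ P.wind (P.p i + s • d) = 1 := by
  obtain ⟨k, _, hk, hst⟩ := structure_thm' hm P
  have hk0 := hk.1 hor
  subst hk0
  obtain ⟨δ, hδ, hball⟩ := ball_vertex (P := P) hm (i - 1)
  rw [sub_add_cancel] at hball
  unfold IsReflex at hi
  set H := Metric.ball (P.p i) δ ∩ {X : Pt | 0 < cross (P.p (i + 1) - P.p i) (X - P.p i)} with hH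
  have hHc : Convex ℝ H := (convex_ball _ _).inter (convex_half' _ _)
  have hoff : ∀ X ∈ H, X ∉ P.boundary := by
    rintro X ⟨hX1, hX2⟩ hb
    simp only [mem_ofPred_eq] at hX2
    rcases (hball X hX1).1 hb with h | h
    · rw [segment_symm, segment_eq_image'] at h
      obtain ⟨θ, hθ, rfl⟩ := h
      have : cross (P.p (i + 1) - P.p i) (P.p i + θ • (P.p (i - 1) - P.p i) - P.p i) =
          θ * cross (P.p i - P.p (i - 1)) (P.p (i + 1) - P.p i) := by
        simp only [cross, Prod.fst_add, Prod.snd_add, Prod.fst_sub, Prod.snd_sub, Prod.smul_fst, Prod.smul_snd, smul_eq_mul]; ring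
      rw [this] at hX2
      nlinarith [hθ.1]
    · rw [segment_eq_image'] at h
      obtain ⟨θ, hθ, rfl⟩ := h
      rw [add_sub_cancel_left, cross_smul_r, cross_self'] at hX2
      linarith
  have htend : ∀ u : Pt, Tendsto (fun s : ℝ => P.p i + s • u) (𝓝[>] 0) (𝓝 (P.p i)) := by
    intro u
    have : Continuous (fun s : ℝ => P.p i + s • u) := by fun_prop
    have h2 := this.tendsto 0
    simp only [zero_smul, add_zero] at h2
    exact h2.mono_left nhdsWithin_le_nhds
  have hbn : Metric.ball (P.p i) δ ∈ 𝓝 (P.p i) := Metric.ball_mem_nhds _ hδ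
  obtain ⟨Y, hYH, hYw⟩ : ∃ Y ∈ H, P.wind Y = 1 := by
    have h1 : ∀ᶠ s : ℝ in 𝓝[>] 0, P.p i + s • (P.p (i + 1) - P.p i) ∈ Metric.ball (P.p i) δ := htend _ hbn
    have h2 : ∀ᶠ s : ℝ in 𝓝[>] 0, s < 1 := nhdsWithin_le_nhds (Iio_mem_nhds one_pos)
    have h3 : ∀ᶠ s : ℝ in 𝓝[>] 0, 0 < s := eventually_mem_nhdsWithin
    obtain ⟨s, hs⟩ := (h1.and (h2.and h3)).exists
    have hz : P.p i + s • (P.p (i + 1) - P.p i) ∈ openSegment ℝ (P.p i) (P.p (i + 1)) := by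
      rw [openSegment_eq_image']; exact ⟨s, ⟨hs.2.2, hs.2.1⟩, rfl⟩
    have h4 : ∀ᶠ X in 𝓝 (P.p i + s • (P.p (i + 1) - P.p i)), X ∈ Metric.ball (P.p i) δ :=
      Metric.isOpen_ball.mem_nhds hs.1
    obtain ⟨Y, hY1, hY2, hY3⟩ := ((freq_side hm hz).1.and_eventually ((hst i _ hz).and h4)).exists
    refine ⟨Y, ⟨hY3, ?_⟩, ?_⟩
    · have := hY1
      rw [side_eq] at this
      exact this
    · rw [(hY2.1 hY1).2]; norm_num
  have h1 : ∀ᶠ s : ℝ in 𝓝[>] 0, P.p i + s • d ∈ Metric.ball (P.p i) δ := htend _ hbn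
  obtain ⟨s0, hs0, hs⟩ := mem_nhdsGT_iff_exists_Ioo_subset.1 h1
  refine ⟨s0, hs0, fun s h0 hlt => ?_⟩
  have hm1 : P.p i + s • d ∈ H := by
    refine ⟨hs ⟨h0, hlt⟩, ?_⟩
    simp only [mem_ofPred_eq]
    rw [add_sub_cancel_left, cross_smul_r]
    positivity
  exact ⟨hoff _ hm1, by rw [wind_const hHc.isPreconnected hoff hm1 hYH, hYw]⟩

lemma exists_chord (hm : 3 ≤ m) (P : SimplePolygon m) (hor : P.PosOriented) (i : ZMod m) (hi : P.IsReflex i) :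
    ∃ (q : Pt) (j : ZMod m), q ∈ openSegment ℝ (P.p j) (P.p (j + 1)) ∧ q ∉ P.vertexSet ∧
      (∀ X ∈ openSegment ℝ (P.p i) q, X ∉ P.boundary ∧ P.wind X = 1) ∧
      0 < cross (P.p (i + 1) - P.p i) (q - P.p i) ∧ 0 < cross (P.p i - P.p (i - 1)) (q - P.p i) ∧
      0 < cross (P.p (j + 1) - P.p j) (P.p i - q) := by
  obtain ⟨d, hd1, hd2, hd3⟩ := exists_dir P i hi
  obtain ⟨s0, hs0, hs⟩ := near_reflex hm P hor i hi hd1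
  have hd0 : d ≠ 0 := by rintro rfl; simp [cross] at hd1
  set f : ℝ → Pt := fun s => P.p i + s • d with hf
  have hfc : Continuous f := by simp only [hf]; fun_prop
  set S := {s : ℝ | s0 ≤ s ∧ f s ∈ P.boundary} with hS
  have hScl : IsClosed S := isClosed_Ici.inter (P.isCompact_boundary.isClosed.preimage hfc)
  have hSne : S.Nonempty := by
    by_contra hne
    rw [not_nonempty_iff_eq_empty] at hne
    have hoff : ∀ X ∈ f '' Ioi 0, X ∉ P.boundary := by
      rintro _ ⟨s, hs', rfl⟩
      rcases lt_or_ge s s0 with h | h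
      · exact (hs s hs' h).1
      · intro hb
        have : s ∈ S := ⟨h, hb⟩
        rw [hne] at this; exact this
    obtain ⟨R, hR⟩ := wind_far P
    have hdn : 0 < ‖d‖ := norm_pos_iff.2 hd0
    set T := (|R| + ‖P.p i‖ + 1) / ‖d‖ with hT
    have hTp : 0 < T := by positivity
    have hn : R < ‖f T‖ := by
      have h1 : ‖T • d‖ ≤ ‖f T‖ + ‖P.p i‖ := by
        have : T • d = f T - P.p i := by simp [hf]
        rw [this]; exact norm_sub_le _ _
      rw [norm_smul, Real.norm_of_nonneg hTp.le, hT, div_mul_cancel₀ _ hdn.ne'] at h1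
      linarith [le_abs_self R]
    have h1 := wind_const (P := P) ((convex_Ioi (0:ℝ)).isPreconnected.image f hfc.continuousOn) hoff
      (mem_image_of_mem f (show T ∈ Ioi 0 from hTp)) (mem_image_of_mem f (show s0 / 2 ∈ Ioi 0 from half_pos hs0))
    rw [(hR _ hn).2, (hs (s0/2) (half_pos hs0) (half_lt_self hs0)).2] at h1
    norm_num at h1
  have hSb : BddBelow S := ⟨s0, fun s h => h.1⟩
  set s1 := sInf S with hs1
  have hs1S : s1 ∈ S := hScl.csInf_mem hSne hSb
  have hs1p : 0 < s1 := lt_of_lt_of_le hs0 hs1S.1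
  have hoff : ∀ s, 0 < s → s < s1 → f s ∉ P.boundary := by
    intro s h0 h1 hb
    rcases lt_or_ge s s0 with h | h
    · exact (hs s h0 h).1 hb
    · have : s1 ≤ s := csInf_le hSb ⟨h, hb⟩
      linarith
  have hq : f s1 - P.p i = s1 • d := by simp [hf]
  have hgen : ∀ n, P.p n ≠ P.p i → cross (f s1 - P.p i) (P.p n - P.p i) ≠ 0 := by
    intro n hn
    rw [hq, cross_smul_l]
    exact mul_ne_zero hs1p.ne' (hd3 n hn)
  have hqr : f s1 ≠ P.p i := by
    intro h; rw [h, sub_self] at hq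
    exact (smul_ne_zero hs1p.ne' hd0) hq.symm
  have hqv : f s1 ∉ P.vertexSet := by
    rintro ⟨n, hn⟩
    refine hgen n (by rw [hn]; exact hqr) ?_
    rw [hn, cross_self']
  obtain ⟨j, hj⟩ := mem_iUnion.1 hs1S.2
  have hqo : f s1 ∈ openSegment ℝ (P.p j) (P.p (j + 1)) :=
    mem_openSegment_of_ne_left_right (fun h => hqv ⟨j, h⟩) (fun h => hqv ⟨j + 1, h⟩) hj
  have hseg : ∀ X ∈ openSegment ℝ (P.p i) (f s1), X ∉ P.boundary ∧ P.wind X = 1 := by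
    have himg : ∀ X ∈ openSegment ℝ (P.p i) (f s1), X ∈ f '' Ioo 0 s1 := by
      intro X hX
      rw [openSegment_eq_image'] at hX
      obtain ⟨θ, hθ, rfl⟩ := hX
      refine ⟨θ * s1, ⟨mul_pos hθ.1 hs1p, by nlinarith [hθ.2]⟩, ?_⟩
      simp only [hq, smul_smul]
      rfl
    have hoff' : ∀ X ∈ f '' Ioo 0 s1, X ∉ P.boundary := by
      rintro _ ⟨s, h, rfl⟩; exact hoff s h.1 h.2
    intro X hX
    refine ⟨hoff' X (himg X hX), ?_⟩
    have hlt : s0 / 2 < s1 := lt_of_lt_of_le (half_lt_self hs0) hs1S.1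
    rw [wind_const (P := P) ((convex_Ioo (0:ℝ) s1).isPreconnected.image f hfc.continuousOn) hoff' (himg X hX)
      (mem_image_of_mem f (show s0 / 2 ∈ Ioo 0 s1 from ⟨half_pos hs0, hlt⟩))]
    exact (hs _ (half_pos hs0) (half_lt_self hs0)).2
  refine ⟨f s1, j, hqo, hqv, hseg, ?_, ?_, ?_⟩
  · rw [hq, cross_smul_r]; positivity
  · rw [hq, cross_smul_r]; positivity
  · obtain ⟨k, _, hk, hst⟩ := structure_thm' hm P
    have hk0 := hk.1 hor
    subst hk0
    obtain ⟨θ, hθ, hθq⟩ := (openSegment_eq_image' ℝ (P.p j) (P.p (j+1))) ▸ hqo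
    simp only at hθq
    rcases lt_trichotomy (cross (P.p (j + 1) - P.p j) (P.p i - f s1)) 0 with h | h | h
    · exfalso
      have hc : Continuous (fun τ : ℝ => f s1 + τ • (P.p i - f s1)) := by fun_prop
      have h2 := hc.tendsto 0
      simp only [zero_smul, add_zero] at h2
      have h3 : ∀ᶠ τ : ℝ in 𝓝[>] 0, (P.side j (f s1 + τ • (P.p i - f s1)) < 0 →
         f s1 + τ • (P.p i - f s1) ∉ P.boundary ∧ P.wind (f s1 + τ • (P.p i - f s1)) = (0:ℤ)) :=
        (h2.mono_left nhdsWithin_le_nhds).eventually ((hst j _ hqo).mono fun X hX => hX.2)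
      have h4 : ∀ᶠ s : ℝ in 𝓝[>] 0, s < 1 := nhdsWithin_le_nhds (Iio_mem_nhds one_pos)
      have h5 : ∀ᶠ s : ℝ in 𝓝[>] 0, 0 < s := eventually_mem_nhdsWithin
      obtain ⟨τ, hτ, hτ1, hτ0⟩ := (h3.and (h4.and h5)).exists
      have h6 : P.side j (f s1 + τ • (P.p i - f s1)) = τ * cross (P.p (j + 1) - P.p j) (P.p i - f s1) := by
        rw [side_eq]
        have : f s1 + τ • (P.p i - f s1) - P.p j = θ • (P.p (j+1) - P.p j) + τ • (P.p i - f s1) := by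
          nth_rw 1 [← hθq]; abel
        rw [this, cross_add_r, cross_smul_r, cross_smul_r, cross_self']; ring
      have h7 := (hτ (by rw [h6]; nlinarith)).2
      have h8 : f s1 + τ • (P.p i - f s1) ∈ openSegment ℝ (P.p i) (f s1) := by
        rw [openSegment_symm, openSegment_eq_image']; exact ⟨τ, ⟨hτ0, hτ1⟩, rfl⟩
      rw [(hseg _ h8).2] at h7
      norm_num at h7
    · exfalso
      by_cases hji : P.p j = P.p i
      · refine hgen (j + 1) (fun h' => P.p_ne hm j (hji.trans h'.symm)) ?_
        rw [← hji]
        rw [← hθq, add_sub_cancel_left, cross_smul_l, cross_self', mul_zero]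
      · refine hgen j hji ?_
        have e1 : P.p j - P.p i = - (θ • (P.p (j+1) - P.p j)) - (P.p i - f s1) := by
          rw [← hθq]; abel
        have e2 : f s1 - P.p i = - (P.p i - f s1) := by abel
        rw [e1, e2]
        generalize P.p i - f s1 = w at *
        generalize P.p (j+1) - P.p j = u at *
        simp only [cross, Prod.fst_sub, Prod.snd_sub, Prod.fst_neg, Prod.snd_neg, Prod.smul_fst, Prod.smul_snd, smul_eq_mul] at h ⊢
        linear_combination -θ * h
    · exact h
end SimplePolygon
end

section
open Set

lemma seg_half {a b q : Pt} (hq : q ∈ openSegment ℝ a b) : ∃ θ : ℝ, 0 < θ ∧ θ < 1 ∧ q = a + θ • (b - a) := by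
  rw [openSegment_eq_image'] at hq
  obtain ⟨θ, h, rfl⟩ := hq
  exact ⟨θ, h.1, h.2, rfl⟩

lemma seg_union {a b q x : Pt} (hq : q ∈ openSegment ℝ a b) (hx : x ∈ segment ℝ a b) :
    x ∈ segment ℝ a q ∨ x ∈ segment ℝ q b := by
  obtain ⟨θ, h0, h1, rfl⟩ := seg_half hq
  rw [segment_eq_image'] at hx
  obtain ⟨s, hs, rfl⟩ := hx
  simp only at *
  rcases le_total s θ with h | h
  · left
    rw [segment_eq_image']
    refine ⟨s / θ, ⟨div_nonneg hs.1 h0.le, (div_le_one h0).2 h⟩, ?_⟩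
    simp only [add_sub_cancel_left, smul_smul]
    rw [div_mul_cancel₀ _ h0.ne']
  · right
    have h2 : 0 < 1 - θ := by linarith
    rw [segment_eq_image']
    refine ⟨(s - θ) / (1 - θ), ⟨div_nonneg (by linarith) h2.le, (div_le_one h2).2 (by linarith [hs.2])⟩, ?_⟩
    simp only
    have e : b - (a + θ • (b - a)) = (1 - θ) • (b - a) := by rw [sub_smul, one_smul]; abel
    rw [e, smul_smul, div_mul_cancel₀ _ h2.ne', sub_smul]; abel

lemma seg_inter {a b q x : Pt} (hab : a ≠ b) (hq : q ∈ openSegment ℝ a b) (h1 : x ∈ segment ℝ a q)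
    (h2 : x ∈ segment ℝ q b) : x = q := by
  obtain ⟨θ, h0, hθ, rfl⟩ := seg_half hq
  rw [segment_eq_image'] at h1 h2
  obtain ⟨s, hs, rfl⟩ := h1
  obtain ⟨s', hs', h⟩ := h2
  simp only [add_sub_cancel_left] at *
  have e : (s * θ - θ - s' * (1 - θ)) • (b - a) = 0 := by
    have e1 : (s * θ - θ - s' * (1 - θ)) • (b - a) = (a + s • θ • (b - a)) - (a + θ • (b - a) + s' • (b - (a + θ • (b - a)))) := by
      module
    rw [e1, h, sub_self]
  rcases smul_eq_zero.1 e with e | e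
  · have h3 : s = 1 := by
      have := mul_nonneg hs'.1 (by linarith : 0 ≤ 1 - θ)
      have h4 : 0 ≤ (s - 1) * θ := by nlinarith
      have h5 : 0 ≤ s - 1 := nonneg_of_mul_nonneg_left h4 h0
      linarith [hs.2]
    rw [h3, one_smul]
  · exact absurd (sub_eq_zero.1 e).symm hab

/-- cyclic sequence of vertices, natural number form -/
structure Cyc (m : ℕ) (v : ℕ → Pt) : Prop where
  per : v m = v 0
  inj : ∀ a b, a < m → b < m → v a = v b → a = b
  edge : ∀ a b x, a < b → b < m → x ∈ segment ℝ (v a) (v (a + 1)) → x ∈ segment ℝ (v b) (v (b + 1)) →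
    (b = a + 1 ∧ x = v b) ∨ (a = 0 ∧ b + 1 = m ∧ x = v 0)

/-- insertion of a point -/
def ins (v : ℕ → Pt) (q : Pt) (k a : ℕ) : Pt := if a ≤ k then v a else if a = k + 1 then q else v (a - 1)

section ins
variable {v : ℕ → Pt} {q : Pt} {k : ℕ}
lemma ins_le {a : ℕ} (h : a ≤ k) : ins v q k a = v a := by unfold ins; rw [if_pos h]
lemma ins_k : ins v q k (k + 1) = q := by unfold ins; rw [if_neg (by omega), if_pos rfl]
lemma ins_gt {a : ℕ} (h : k + 1 ≤ a) : ins v q k (a + 1) = v a := by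
  unfold ins; rw [if_neg (by omega), if_neg (by omega)]; rfl

variable {m : ℕ} (hv : Cyc m v) (hk1 : 1 ≤ k) (hk2 : k + 2 ≤ m) (hq : q ∈ openSegment ℝ (v k) (v (k + 1)))
  (hqv : ∀ a, q ≠ v a)
include hv hk1 hk2 hq hqv

lemma ins_cyc : Cyc (m + 1) (ins v q k) := by
  have hne : v k ≠ v (k + 1) := fun h => by
    have := hv.inj k (k + 1) (by omega) (by omega) h
    omega
  have hs1 : segment ℝ (v k) q ⊆ segment ℝ (v k) (v (k + 1)) :=
    (convex_segment _ _).segment_subset (left_mem_segment _ _ _) (openSegment_subset_segment _ _ _ hq)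
  have hs2 : segment ℝ q (v (k + 1)) ⊆ segment ℝ (v k) (v (k + 1)) :=
    (convex_segment _ _).segment_subset (openSegment_subset_segment _ _ _ hq) (right_mem_segment _ _ _)
  have hl : v k ∉ segment ℝ q (v (k + 1)) := fun h => hqv k (seg_inter hne hq (left_mem_segment _ _ _) h).symm
  have hr : v (k + 1) ∉ segment ℝ (v k) q := fun h => hqv (k + 1) (seg_inter hne hq h (right_mem_segment _ _ _)).symm
  refine ⟨?_, ?_, ?_⟩
  · rw [ins_gt (by omega), ins_le (by omega), hv.per]
  · have key : ∀ a b, a < b → b < m + 1 → ins v q k a ≠ ins v q k b := by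
      intro a b hab hb h
      rcases le_or_gt b k with h1 | h1
      · rw [ins_le h1, ins_le (by omega)] at h
        have := hv.inj _ _ (by omega) (by omega) h
        omega
      · obtain ⟨b, rfl⟩ : ∃ b', b = b' + 1 := ⟨b - 1, by omega⟩
        rcases Nat.lt_or_ge k b with h2 | h2
        · rw [ins_gt (by omega : k + 1 ≤ b)] at h
          rcases le_or_gt a k with h3 | h3
          · rw [ins_le h3] at h
            have := hv.inj _ _ (by omega) (by omega) h
            omega
          · obtain ⟨a, rfl⟩ : ∃ b', a = b' + 1 := ⟨a - 1, by omega⟩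
            rcases Nat.lt_or_ge k a with h4 | h4
            · rw [ins_gt (by omega : k + 1 ≤ a)] at h
              have := hv.inj _ _ (by omega) (by omega) h
              omega
            · have : a = k := by omega
              subst this
              rw [ins_k] at h
              exact hqv _ h
        · have : b = k := by omega
          subst this
          rw [ins_k, ins_le (by omega)] at h
          exact hqv _ h.symm
    intro a b ha hb h
    rcases lt_trichotomy a b with h1 | h1 | h1
    · exact absurd h (key a b h1 hb)
    · exact h1
    · exact absurd h.symm (key b a h1 ha)
  · intro a b x hab hb hxa hxb
    have c1 : ∀ a, a < k → ins v q k a = v a ∧ ins v q k (a + 1) = v (a + 1) := fun a h =>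
      ⟨ins_le h.le, ins_le h⟩
    have c2 : ins v q k k = v k := ins_le le_rfl
    have c3 : ins v q k (k + 1) = q := ins_k
    have c4 : ins v q k (k + 1 + 1) = v (k + 1) := ins_gt le_rfl
    have c0 : ins v q k 0 = v 0 := ins_le (by omega)
    rcases Nat.lt_trichotomy b k with h1 | h1 | h1
    · rw [(c1 b h1).1, (c1 b h1).2] at hxb
      rw [(c1 a (by omega)).1, (c1 a (by omega)).2] at hxa
      rcases hv.edge a b x hab (by omega) hxa hxb with h | h
      · left; rw [(c1 b h1).1]; exact h
      · omega
    · subst h1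
      rw [c2, c3] at hxb
      rw [(c1 a (by omega)).1, (c1 a (by omega)).2] at hxa
      rcases hv.edge a b x hab (by omega) hxa (hs1 hxb) with h | h
      · left; rw [c2]; exact h
      · omega
    · rcases Nat.lt_or_ge (k + 1) b with h2 | h2
      · obtain ⟨b, rfl⟩ : ∃ b', b = b' + 1 := ⟨b - 1, by omega⟩
        rw [ins_gt (by omega), ins_gt (by omega)] at hxb
        rcases Nat.lt_trichotomy a k with h3 | h3 | h3
        · rw [(c1 a (by omega)).1, (c1 a (by omega)).2] at hxa
          rcases hv.edge a b x (by omega) (by omega) hxa hxb with h | h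
          · omega
          · right; rw [c0]; exact ⟨h.1, by omega, h.2.2⟩
        · subst h3
          rw [c2, c3] at hxa
          rcases hv.edge a b x (by omega) (by omega) (hs1 hxa) hxb with h | h
          · exfalso
            apply hr
            rw [← h.1, ← h.2]; exact hxa
          · omega
        · rcases Nat.lt_or_ge (k + 1) a with h4 | h4
          · obtain ⟨a, rfl⟩ : ∃ b', a = b' + 1 := ⟨a - 1, by omega⟩
            rw [ins_gt (by omega), ins_gt (by omega)] at hxa
            rcases hv.edge a b x (by omega) (by omega) hxa hxb with h | h
            · left; rw [ins_gt (by omega)]; exact ⟨by omega, h.2⟩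
            · omega
          · have : a = k + 1 := by omega
            subst this
            rw [c3, c4] at hxa
            rcases hv.edge k b x (by omega) (by omega) (hs2 hxa) hxb with h | h
            · left; rw [ins_gt (by omega)]; exact ⟨by omega, h.2⟩
            · omega
      · have : b = k + 1 := by omega
        subst this
        rw [c3, c4] at hxb
        rcases Nat.lt_or_ge a k with h3 | h3
        · rw [(c1 a (by omega)).1, (c1 a (by omega)).2] at hxa
          rcases hv.edge a k x (by omega) (by omega) hxa (hs2 hxb) with h | h
          · exfalso; apply hl; rw [← h.2]; exact hxb
          · omega
        · have : a = k := by omega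
          subst this
          rw [c2, c3] at hxa
          left
          rw [c3]
          exact ⟨rfl, seg_inter hne hq hxa hxb⟩

lemma ins_bdry (x : Pt) : (∃ a < m + 1, x ∈ segment ℝ (ins v q k a) (ins v q k (a + 1))) ↔
    ∃ a < m, x ∈ segment ℝ (v a) (v (a + 1)) := by
  have hs1 : segment ℝ (v k) q ⊆ segment ℝ (v k) (v (k + 1)) :=
    (convex_segment _ _).segment_subset (left_mem_segment _ _ _) (openSegment_subset_segment _ _ _ hq)
  have hs2 : segment ℝ q (v (k + 1)) ⊆ segment ℝ (v k) (v (k + 1)) :=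
    (convex_segment _ _).segment_subset (openSegment_subset_segment _ _ _ hq) (right_mem_segment _ _ _)
  constructor
  · rintro ⟨a, ha, hx⟩
    rcases Nat.lt_trichotomy a k with h | h | h
    · rw [ins_le h.le, ins_le h] at hx
      exact ⟨a, by omega, hx⟩
    · subst h
      rw [ins_le le_rfl, ins_k] at hx
      exact ⟨a, by omega, hs1 hx⟩
    · obtain ⟨a, rfl⟩ : ∃ b', a = b' + 1 := ⟨a - 1, by omega⟩
      rcases Nat.lt_or_ge k a with h4 | h4
      · rw [ins_gt (by omega), ins_gt (by omega)] at hx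
        exact ⟨a, by omega, hx⟩
      · have : a = k := by omega
        subst this
        rw [ins_k, ins_gt (by omega)] at hx
        exact ⟨a, by omega, hs2 hx⟩
  · rintro ⟨a, ha, hx⟩
    rcases Nat.lt_trichotomy a k with h | h | h
    · refine ⟨a, by omega, ?_⟩
      rw [ins_le h.le, ins_le h]; exact hx
    · subst h
      rcases seg_union hq hx with h | h
      · refine ⟨a, by omega, ?_⟩
        rw [ins_le le_rfl, ins_k]; exact h
      · refine ⟨a + 1, by omega, ?_⟩
        rw [ins_k, ins_gt le_rfl]; exact h
    · refine ⟨a + 1, by omega, ?_⟩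
      rw [ins_gt (by omega), ins_gt (by omega)]; exact hx

lemma ins_reflex {a : ℕ} (ha : a < m) (hak : a ≠ k)
    (h : cross (ins v q k (a + 1) - ins v q k a) (ins v q k (a + 1 + 1) - ins v q k (a + 1)) < 0) :
    ∃ b, cross (v (b + 1) - v b) (v (b + 1 + 1) - v (b + 1)) < 0 ∧ ins v q k (a + 1) = v (b + 1) := by
  obtain ⟨θ, h0, h1, hθ⟩ := seg_half hq
  rcases Nat.lt_trichotomy (a + 1) k with h2 | h2 | h2
  · rw [ins_le (by omega), ins_le (by omega), ins_le (by omega)] at h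
    exact ⟨a, h, ins_le (by omega)⟩
  · refine ⟨a, ?_, ins_le (by omega)⟩
    subst h2
    rw [ins_le (by omega), ins_le (by omega), ins_k, hθ, add_sub_cancel_left, cross_smul_r] at h
    by_contra hn
    push Not at hn
    have := mul_nonneg h0.le hn
    linarith
  · obtain ⟨a, rfl⟩ : ∃ b', a = b' + 1 := ⟨a - 1, by omega⟩
    rcases Nat.lt_trichotomy a k with h3 | h3 | h3
    · omega
    · subst h3
      refine ⟨a, ?_, ins_gt (by omega)⟩
      rw [ins_k, ins_gt le_rfl, ins_gt (a := a + 1 + 1) (by omega)] at h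
      have e : v (a + 1) - q = (1 - θ) • (v (a + 1) - v a) := by
        rw [hθ]; module
      rw [e, cross_smul_l] at h
      by_contra hn
      push Not at hn
      have := mul_nonneg (by linarith : 0 ≤ 1 - θ) hn
      linarith
    · refine ⟨a, ?_, ins_gt (by omega)⟩
      rw [ins_gt (by omega), ins_gt (by omega), ins_gt (by omega)] at h
      exact h

lemma ins_sum {X : Pt} (hX : X ∉ segment ℝ (v k) (v (k + 1))) (hc : cross (v k - X) (v (k + 1) - X) ≠ 0) :
    ∑ a ∈ Finset.range (m + 1), ang (ins v q k a) (ins v q k (a + 1)) X =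
    ∑ a ∈ Finset.range m, ang (v a) (v (a + 1)) X := by
  obtain ⟨θ, h0, h1, hθ⟩ := seg_half hq
  obtain ⟨c, rfl⟩ : ∃ c, m = k + 1 + c := ⟨m - (k + 1), by omega⟩
  have e : k + 1 + c + 1 = k + 1 + 1 + c := by omega
  rw [e, Finset.sum_range_add _ (k + 1 + 1) c, Finset.sum_range_add _ (k + 1) c, Finset.sum_range_succ, Finset.sum_range_succ, Finset.sum_range_succ,
    ins_k, ins_gt le_rfl, ins_le le_rfl, ← ang_add θ h0 h1 hθ hX hc]
  have e1 : ∑ a ∈ Finset.range k, ang (ins v q k a) (ins v q k (a + 1)) X = ∑ a ∈ Finset.range k, ang (v a) (v (a + 1)) X := by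
    apply Finset.sum_congr rfl
    intro a ha
    rw [Finset.mem_range] at ha
    rw [ins_le (by omega), ins_le (by omega)]
  have e2 : ∑ a ∈ Finset.range c, ang (ins v q k (k + 1 + 1 + a)) (ins v q k (k + 1 + 1 + a + 1)) X =
      ∑ a ∈ Finset.range c, ang (v (k + 1 + a)) (v (k + 1 + a + 1)) X := by
    apply Finset.sum_congr rfl
    intro a ha
    have e : k + 1 + 1 + a = k + 1 + a + 1 := by omega
    rw [e, ins_gt (by omega), ins_gt (by omega)]
  rw [e1, e2]; ring

end ins
end

section
open Set

namespace SimplePolygon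
variable {m : ℕ} [NeZero m] {P : SimplePolygon m}

def vs (P : SimplePolygon m) (i : ZMod m) (n : ℕ) : Pt := P.p (i + n)

lemma vs_succ (P : SimplePolygon m) (i : ZMod m) (n : ℕ) : P.p (i + n + 1) = P.vs i (n + 1) := by
  unfold vs; push_cast; rw [add_assoc]

lemma vs_val (P : SimplePolygon m) (i j : ZMod m) : P.vs i (j - i).val = P.p j := by
  unfold vs; simp

lemma cast_eq {a b : ℕ} (ha : a < m) (hb : b < m) (h : (a : ZMod m) = b) : a = b := by
  rw [← ZMod.val_natCast_of_lt ha, ← ZMod.val_natCast_of_lt hb, h]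

lemma vs_cyc (P : SimplePolygon m) (i : ZMod m) : Cyc m (P.vs i) := by
  refine ⟨by simp [vs], ?_, ?_⟩
  · intro a b ha hb h
    exact cast_eq ha hb (add_left_cancel (P.inj h))
  · intro a b x hab hb hxa hxb
    rw [← vs_succ] at hxa hxb
    by_cases h1 : b = a + 1
    · left
      refine ⟨h1, ?_⟩
      have := P.consec (i + a)
      have e : i + (b : ZMod m) = i + a + 1 := by rw [h1]; push_cast; ring
      unfold vs at hxa hxb ⊢
      rw [e] at hxb ⊢
      have hx : x ∈ ({P.p (i + a + 1)} : Set Pt) := by rw [← this]; exact ⟨hxa, hxb⟩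
      exact hx
    · by_cases h2 : a = 0 ∧ b + 1 = m
      · right
        refine ⟨h2.1, h2.2, ?_⟩
        obtain ⟨rfl, h3⟩ := h2
        have := P.consec (i + b)
        have e : i + (b : ZMod m) + 1 = i := by
          have : ((b + 1 : ℕ) : ZMod m) = 0 := by rw [h3]; simp
          push_cast at this
          rw [add_assoc, this, add_zero]
        unfold vs at hxa hxb ⊢
        simp only [Nat.cast_zero, add_zero] at hxa ⊢
        rw [e] at this hxb
        have hx : x ∈ ({P.p i} : Set Pt) := by rw [← this]; exact ⟨hxb, hxa⟩
        exact hx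
      · exfalso
        have := P.disj (i + a) (i + b) ?_ ?_ ?_
        · have hx : x ∈ (∅ : Set Pt) := by rw [← this]; exact ⟨hxa, hxb⟩
          exact hx
        · intro h
          have := cast_eq (by omega) hb (add_left_cancel h)
          omega
        · intro h
          rw [add_assoc] at h
          have h := add_left_cancel h
          have := cast_eq (m := m) (a := a + 1) (b := b) (by omega) hb (by push_cast; exact h)
          omega
        · intro h
          rw [add_assoc] at h
          have h := add_left_cancel h
          rcases Nat.lt_or_ge (b + 1) m with h3 | h3
          · have := cast_eq (m := m) (a := b + 1) (b := a) (by omega) (by omega) (by push_cast; exact h)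
            omega
          · have h4 : b + 1 = m := by omega
            have h5 : ((b + 1 : ℕ) : ZMod m) = 0 := by rw [h4]; simp
            push_cast at h5
            have := cast_eq (m := m) (a := 0) (b := a) (by omega) (by omega) (by rw [← h, h5]; simp)
            omega

lemma exists_vs (i j : ZMod m) : ∃ a < m, j = i + (a : ZMod m) :=
  ⟨(j - i).val, ZMod.val_lt _, by simp⟩

lemma mem_boundary_vs (P : SimplePolygon m) (i : ZMod m) (x : Pt) :
    x ∈ P.boundary ↔ ∃ a < m, x ∈ segment ℝ (P.vs i a) (P.vs i (a + 1)) := by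
  unfold boundary
  rw [mem_iUnion]
  constructor
  · rintro ⟨j, hj⟩
    obtain ⟨a, ha, rfl⟩ := exists_vs i j
    refine ⟨a, ha, ?_⟩
    rw [← vs_succ]; exact hj
  · rintro ⟨a, ha, h⟩
    refine ⟨i + a, ?_⟩
    rw [← vs_succ] at h; exact h

lemma mem_vertex_vs (P : SimplePolygon m) (i : ZMod m) (x : Pt) :
    x ∈ P.vertexSet ↔ ∃ a < m, x = P.vs i a := by
  constructor
  · rintro ⟨j, rfl⟩
    obtain ⟨a, ha, rfl⟩ := exists_vs i j
    exact ⟨a, ha, rfl⟩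
  · rintro ⟨a, ha, rfl⟩
    exact ⟨_, rfl⟩

lemma mem_reflex_vs (P : SimplePolygon m) (i : ZMod m) (x : Pt) :
    x ∈ P.reflexSet ↔ ∃ a < m, cross (P.vs i (a + 1) - P.vs i a) (P.vs i (a + 1 + 1) - P.vs i (a + 1)) < 0 ∧
      x = P.vs i (a + 1) := by
  constructor
  · rintro ⟨j, hj, rfl⟩
    obtain ⟨a, ha, h⟩ := exists_vs i (j - 1)
    have e : j = i + a + 1 := by rw [← h]; ring
    refine ⟨a, ha, ?_, ?_⟩
    · unfold IsReflex at hj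
      rw [h, e] at hj
      rw [← vs_succ P i (a + 1), ← vs_succ]
      push_cast
      rw [← add_assoc]
      exact hj
    · rw [← vs_succ, e]
  · rintro ⟨a, ha, h, rfl⟩
    refine ⟨i + a + 1, ?_, (vs_succ P i a).symm⟩
    unfold IsReflex
    rw [← vs_succ P i (a + 1), ← vs_succ] at h
    push_cast at h
    rw [← add_assoc] at h
    rw [add_sub_cancel_right]
    exact h

lemma reflex_of (P : SimplePolygon m) (i : ZMod m) (b : ℕ)
    (h : cross (P.vs i (b + 1) - P.vs i b) (P.vs i (b + 1 + 1) - P.vs i (b + 1)) < 0) :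
    P.vs i (b + 1) ∈ P.reflexSet := by
  refine ⟨i + b + 1, ?_, (vs_succ P i b).symm⟩
  unfold IsReflex
  rw [← vs_succ P i (b + 1), ← vs_succ] at h
  push_cast at h
  rw [← add_assoc] at h
  rw [add_sub_cancel_right]
  exact h

lemma wind_vs (P : SimplePolygon m) (i : ZMod m) (X : Pt) :
    P.wind X = (∑ a ∈ Finset.range m, ang (P.vs i a) (P.vs i (a + 1)) X) / (2 * Real.pi) := by
  unfold wind
  congr 1
  refine Finset.sum_bij' (fun j _ => (j - i).val) (fun n _ => i + (n : ZMod m)) ?_ ?_ ?_ ?_ ?_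
  · intro i _; simp [ZMod.val_lt]
  · intro n _; simp
  · intro i _; simp
  · intro n hn; simp only [add_sub_cancel_left]; exact ZMod.val_natCast_of_lt (Finset.mem_range.1 hn)
  · intro j _; rw [← vs_succ]; simp [vs]

end SimplePolygon

/-- closed up polyline -/
structure Arc (n : ℕ) (w : ℕ → Pt) : Prop where
  two : 2 ≤ n
  inj : ∀ a b, a ≤ n → b ≤ n → w a = w b → a = b
  edge : ∀ a b x, a < b → b < n → x ∈ segment ℝ (w a) (w (a + 1)) → x ∈ segment ℝ (w b) (w (b + 1)) →
    b = a + 1 ∧ x = w b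
  chord : ∀ a x, a < n → x ∈ segment ℝ (w a) (w (a + 1)) → x ∈ segment ℝ (w n) (w 0) →
    (a = 0 ∧ x = w 0) ∨ (a + 1 = n ∧ x = w n)

lemma Arc.exists_poly {n : ℕ} {w : ℕ → Pt} (h : Arc n w) :
    ∃ Q : SimplePolygon (n + 1), (∀ a ≤ n, Q.vs 0 a = w a) := by
  have h2 := h.two
  have hval : ∀ z : ZMod (n + 1), z.val ≤ n := fun z => Nat.lt_succ_iff.1 (ZMod.val_lt z)
  have hs : ∀ z : ZMod (n + 1), (z.val < n ∧ (z + 1).val = z.val + 1) ∨ (z.val = n ∧ (z + 1).val = 0) := by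
    intro z
    have e : (z + 1).val = (z.val + 1) % (n + 1) := by
      rw [ZMod.val_add, ZMod.val_one'' (by omega)]
    rcases Nat.lt_or_ge z.val n with h | h
    · left; exact ⟨h, by rw [e, Nat.mod_eq_of_lt (by omega)]⟩
    · right
      have := hval z
      have e2 : z.val = n := by omega
      exact ⟨e2, by rw [e, e2, Nat.mod_self]⟩
  -- disjointness in ordered form
  have key : ∀ z y : ZMod (n + 1), z.val < y.val → z + 1 ≠ y → y + 1 ≠ z →
      ∀ x, x ∈ segment ℝ (w z.val) (w (z + 1).val) → x ∈ segment ℝ (w y.val) (w (y + 1).val) → False := by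
    intro z y hlt h1 h2 x hx hy
    have hz : z.val < n := lt_of_lt_of_le hlt (hval y)
    have hz1 : (z + 1).val = z.val + 1 := by
      rcases hs z with h | h
      · exact h.2
      · omega
    rw [hz1] at hx
    rcases hs y with h3 | h3
    · rw [h3.2] at hy
      have := (h.edge _ _ x hlt h3.1 hx hy).1
      apply h1
      apply ZMod.val_injective
      omega
    · rw [h3.1, h3.2] at hy
      rcases h.chord _ x hz hx hy with h4 | h4
      · apply h2
        apply ZMod.val_injective
        omega
      · apply h1
        apply ZMod.val_injective
        omega
  refine ⟨⟨fun z => w z.val, ?_, ?_, ?_⟩, ?_⟩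
  · intro y z hyz
    exact ZMod.val_injective _ (h.inj _ _ (hval y) (hval z) hyz)
  · intro z
    apply Subset.antisymm
    · rintro x ⟨hx, hy⟩
      rw [mem_singleton_iff]
      rcases hs z with h1 | h1
      · rw [h1.2] at hx hy ⊢
        rcases hs (z + 1) with h3 | h3
        · rw [h3.2, h1.2] at hy
          exact (h.edge _ _ x (Nat.lt_succ_self _) (by omega) hx hy).2
        · rw [h3.2] at hy
          have e : z.val + 1 = n := by omega
          have hy' := hy
          rw [e] at hy'
          rcases h.chord _ x h1.1 hx hy' with h4 | h4
          · omega
          · rw [e]; exact h4.2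
      · rw [h1.1, h1.2] at hx
        rcases hs (z + 1) with h3 | h3
        · rw [h3.2, h1.2] at hy
          rw [h1.2]
          rcases h.chord _ x (by omega) hy hx with h4 | h4
          · exact h4.2
          · omega
        · omega
    · rintro x rfl
      exact ⟨right_mem_segment _ _ _, left_mem_segment _ _ _⟩
  · intro z y h1 h2 h3
    rw [eq_empty_iff_forall_notMem]
    rintro x ⟨hx, hy⟩
    have hne : z.val ≠ y.val := fun h => h1 (ZMod.val_injective _ h)
    rcases lt_or_gt_of_ne hne with h4 | h4
    · exact key z y h4 h2 h3 x hx hy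
    · exact key y z h4 h3 h2 x hy hx
  · intro a ha
    simp only [SimplePolygon.vs, zero_add]
    rw [ZMod.val_natCast_of_lt (by omega)]

namespace Arc
variable {n : ℕ} {w : ℕ → Pt} {Q : SimplePolygon (n + 1)} (h : Arc n w) (hQ : ∀ a ≤ n, Q.vs 0 a = w a)
include hQ

lemma vs_last : Q.vs 0 (n + 1) = w 0 := by
  rw [(Q.vs_cyc 0).per, hQ 0 (by omega)]

lemma bdry (x : Pt) : x ∈ Q.boundary ↔ (∃ a < n, x ∈ segment ℝ (w a) (w (a + 1))) ∨ x ∈ segment ℝ (w n) (w 0) := by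
  rw [Q.mem_boundary_vs 0]
  constructor
  · rintro ⟨a, ha, hx⟩
    rcases Nat.lt_or_ge a n with h1 | h1
    · left; refine ⟨a, h1, ?_⟩
      rw [← hQ a (by omega), ← hQ (a + 1) (by omega)]; exact hx
    · have : a = n := by omega
      subst this
      right; rw [hQ a (by omega), vs_last hQ] at hx; exact hx
  · rintro (⟨a, ha, hx⟩ | hx)
    · refine ⟨a, by omega, ?_⟩
      rw [hQ a (by omega), hQ (a + 1) (by omega)]; exact hx
    · refine ⟨n, by omega, ?_⟩
      rw [hQ n (by omega), vs_last hQ]; exact hx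

lemma vert (x : Pt) : x ∈ Q.vertexSet ↔ ∃ a ≤ n, x = w a := by
  rw [Q.mem_vertex_vs 0]
  constructor
  · rintro ⟨a, ha, hx⟩
    exact ⟨a, by omega, by rw [← hQ a (by omega)]; exact hx⟩
  · rintro ⟨a, ha, hx⟩
    exact ⟨a, by omega, by rw [hQ a (by omega)]; exact hx⟩

include h in
lemma reflex {x : Pt} (hx : x ∈ Q.reflexSet) :
    (∃ a, a + 1 < n ∧ cross (w (a + 1) - w a) (w (a + 1 + 1) - w (a + 1)) < 0 ∧ x = w (a + 1)) ∨
    cross (w n - w (n - 1)) (w 0 - w n) < 0 ∨ cross (w 0 - w n) (w 1 - w 0) < 0 := by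
  have h2 := h.two
  obtain ⟨a, ha, hc, rfl⟩ := (Q.mem_reflex_vs 0 x).1 hx
  rcases Nat.lt_trichotomy (a + 1) n with h1 | h1 | h1
  · left
    refine ⟨a, h1, ?_, hQ _ (by omega)⟩
    rw [← hQ a (by omega), ← hQ (a + 1) (by omega), ← hQ (a + 1 + 1) (by omega)]; exact hc
  · right; left
    subst h1
    rw [hQ a (by omega), hQ (a + 1) (by omega), vs_last hQ] at hc
    exact hc
  · right; right
    have : a = n := by omega
    subst this
    have e : Q.vs 0 (a + 1 + 1) = w 1 := by
      have : Q.vs 0 (a + 1 + 1) = Q.vs 0 1 := by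
        have e1 : ((a + 1 : ℕ) : ZMod (a + 1)) = 0 := ZMod.natCast_self _
        unfold SimplePolygon.vs
        rw [Nat.cast_add, e1]; simp
      rw [this, hQ 1 (by omega)]
    rw [hQ a (by omega), vs_last hQ, e] at hc
    exact hc

lemma wind_eq (X : Pt) : Q.wind X = (∑ a ∈ Finset.range n, ang (w a) (w (a + 1)) X + ang (w n) (w 0) X) / (2 * Real.pi) := by
  rw [Q.wind_vs 0, Finset.sum_range_succ, hQ n (by omega), vs_last hQ]
  congr 2
  apply Finset.sum_congr rfl
  intro a ha
  rw [Finset.mem_range] at ha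
  rw [hQ a (by omega), hQ (a + 1) (by omega)]

end Arc
end

section
open Set
open Filter Topology

section arcs
variable {m k c : ℕ} {W : ℕ → Pt} (hW : Cyc (m + 1) W) (hk : 1 ≤ k) (hc : 1 ≤ c) (hm : m = k + 1 + c)
  (hch : ∀ a ≤ m, ∀ x ∈ segment ℝ (W a) (W (a + 1)), x ∈ segment ℝ (W 0) (W (k + 1)) → x = W 0 ∨ x = W (k + 1))
include hW hk hc hm hch

lemma arc_one : Arc (k + 1) W := by
  refine ⟨by omega, fun a b ha hb => hW.inj a b (by omega) (by omega), ?_, ?_⟩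
  · intro a b x hab hb hx hy
    rcases hW.edge a b x hab (by omega) hx hy with h | h
    · exact h
    · omega
  · intro a x ha hx hy
    rw [segment_symm] at hy
    rcases hch a (by omega) x hx hy with h | h
    · left
      refine ⟨?_, h⟩
      by_contra hne
      rcases hW.edge 0 a x (by omega) (by omega) (by rw [h]; exact left_mem_segment _ _ _) hx with h1 | h1
      · have := hW.inj 0 a (by omega) (by omega) (h.symm.trans h1.2)
        omega
      · omega
    · right
      refine ⟨?_, h⟩
      by_contra hne
      rcases hW.edge a k x (by omega) (by omega) hx (by rw [h]; exact right_mem_segment _ _ _) with h1 | h1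
      · have := hW.inj (k + 1) k (by omega) (by omega) (h.symm.trans h1.2)
        omega
      · omega

lemma arc_two : Arc (c + 1) (fun a => W (k + 1 + a)) := by
  have e : k + 1 + (c + 1) = m + 1 := by omega
  have key : ∀ a, a ≤ c → W (k + 1 + a) ≠ W (m + 1) := by
    intro a ha h
    rw [hW.per] at h
    have := hW.inj _ _ (by omega) (by omega) h
    omega
  refine ⟨by omega, ?_, ?_, ?_⟩
  · intro a b ha hb h
    rcases Nat.lt_or_ge a (c + 1) with h1 | h1
    · rcases Nat.lt_or_ge b (c + 1) with h2 | h2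
      · have := hW.inj _ _ (by omega) (by omega) h
        omega
      · have : b = c + 1 := by omega
        rw [this, e] at h
        exact absurd h (key a (by omega))
    · have h3 : a = c + 1 := by omega
      rcases Nat.lt_or_ge b (c + 1) with h2 | h2
      · rw [h3, e] at h
        exact absurd h.symm (key b (by omega))
      · omega
  · intro a b x hab hb hx hy
    rcases hW.edge (k + 1 + a) (k + 1 + b) x (by omega) (by omega) hx hy with h | h
    · exact ⟨by omega, h.2⟩
    · omega
  · intro a x ha hx hy
    rw [e, hW.per, add_zero] at hy
    rcases hch (k + 1 + a) (by omega) x hx hy with h | h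
    · right
      rw [e, hW.per]
      refine ⟨?_, h⟩
      rcases hW.edge 0 (k + 1 + a) x (by omega) (by omega) (by rw [h]; exact left_mem_segment _ _ _) hx with h1 | h1
      · omega
      · omega
    · left
      simp only [add_zero]
      refine ⟨?_, h⟩
      rcases hW.edge k (k + 1 + a) x (by omega) (by omega) (by rw [h]; exact right_mem_segment _ _ _) hx with h1 | h1
      · omega
      · omega

variable {P₁ : SimplePolygon (k + 1 + 1)} {P₂ : SimplePolygon (c + 1 + 1)}
  (h1 : ∀ a ≤ k + 1, P₁.vs 0 a = W a) (h2 : ∀ a ≤ c + 1, P₂.vs 0 a = W (k + 1 + a))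
include h1 h2

lemma bdry_union (x : Pt) : x ∈ P₁.boundary ∪ P₂.boundary ↔
    (∃ a < m + 1, x ∈ segment ℝ (W a) (W (a + 1))) ∨ x ∈ segment ℝ (W 0) (W (k + 1)) := by
  have e : k + 1 + (c + 1) = m + 1 := by omega
  rw [mem_union, Arc.bdry h1, Arc.bdry (w := fun a => W (k + 1 + a)) h2]
  simp only [e, hW.per, add_zero]
  rw [segment_symm ℝ (W (k + 1))]
  constructor
  · rintro ((⟨a, ha, h⟩ | h) | ⟨a, ha, h⟩ | h)
    · exact Or.inl ⟨a, by omega, h⟩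
    · exact Or.inr h
    · exact Or.inl ⟨k + 1 + a, by omega, h⟩
    · exact Or.inr h
  · rintro (⟨a, ha, h⟩ | h)
    · rcases Nat.lt_or_ge a (k + 1) with h3 | h3
      · exact Or.inl (Or.inl ⟨a, h3, h⟩)
      · obtain ⟨b, rfl⟩ := Nat.exists_eq_add_of_le h3
        exact Or.inr (Or.inl ⟨b, by omega, h⟩)
    · exact Or.inl (Or.inr h)

lemma bdry_inter : P₁.boundary ∩ P₂.boundary = segment ℝ (W 0) (W (k + 1)) := by
  have e : k + 1 + (c + 1) = m + 1 := by omega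
  ext x
  rw [mem_inter_iff, Arc.bdry h1, Arc.bdry (w := fun a => W (k + 1 + a)) h2]
  simp only [e, hW.per, add_zero]
  rw [segment_symm ℝ (W (k + 1))]
  constructor
  · rintro ⟨⟨a, ha, h⟩ | h, ⟨b, hb, h'⟩ | h'⟩
    · rcases hW.edge a (k + 1 + b) x (by omega) (by omega) h h' with h3 | h3
      · have : b = 0 := by omega
        subst this
        rw [h3.2]; exact right_mem_segment _ _ _
      · rw [h3.2.2]; exact left_mem_segment _ _ _
    · exact h'
    · exact h
    · exact h
  · intro h; exact ⟨Or.inr h, Or.inr h⟩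

lemma vert_union (x : Pt) : x ∈ P₁.vertexSet ∪ P₂.vertexSet ↔ ∃ a < m + 1, x = W a := by
  have e : k + 1 + (c + 1) = m + 1 := by omega
  rw [mem_union, Arc.vert h1, Arc.vert (w := fun a => W (k + 1 + a)) h2]
  constructor
  · rintro (⟨a, ha, h⟩ | ⟨a, ha, h⟩)
    · exact ⟨a, by omega, h⟩
    · rcases Nat.lt_or_ge a (c + 1) with h3 | h3
      · exact ⟨k + 1 + a, by omega, h⟩
      · have : a = c + 1 := by omega
        simp only [this, e, hW.per] at h
        exact ⟨0, by omega, h⟩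
  · rintro ⟨a, ha, h⟩
    rcases Nat.lt_or_ge a (k + 1) with h3 | h3
    · exact Or.inl ⟨a, by omega, h⟩
    · obtain ⟨b, rfl⟩ := Nat.exists_eq_add_of_le h3
      exact Or.inr ⟨b, by omega, h⟩

lemma vert_inter : P₁.vertexSet ∩ P₂.vertexSet = {W 0, W (k + 1)} := by
  have e : k + 1 + (c + 1) = m + 1 := by omega
  ext x
  rw [mem_inter_iff, Arc.vert h1, Arc.vert (w := fun a => W (k + 1 + a)) h2, mem_insert_iff, mem_singleton_iff]
  constructor
  · rintro ⟨⟨a, ha, rfl⟩, ⟨b, hb, h'⟩⟩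
    rcases Nat.lt_or_ge b (c + 1) with h3 | h3
    · have := hW.inj _ _ (by omega) (by omega) h'
      right
      have : a = k + 1 := by omega
      rw [this]
    · have : b = c + 1 := by omega
      simp only [this, e, hW.per] at h'
      exact Or.inl h'
  · rintro (rfl | rfl)
    · exact ⟨⟨0, by omega, rfl⟩, c + 1, le_rfl, by simp only [e, hW.per]⟩
    · exact ⟨⟨k + 1, by omega, rfl⟩, 0, by omega, rfl⟩

lemma wind_add {X : Pt} (hX : X ∉ segment ℝ (W 0) (W (k + 1))) : P₁.wind X + P₂.wind X =
    (∑ a ∈ Finset.range (m + 1), ang (W a) (W (a + 1)) X) / (2 * Real.pi) := by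
  have e : k + 1 + (c + 1) = m + 1 := by omega
  rw [Arc.wind_eq h1, Arc.wind_eq (w := fun a => W (k + 1 + a)) h2, ← e, Finset.sum_range_add _ (k + 1) (c + 1)]
  simp only [e, hW.per, add_zero]
  have := ang_swap hX
  rw [← add_div]
  congr 1
  simp only [← Nat.add_assoc]
  linarith

end arcs

namespace SimplePolygon

lemma orient {k c : ℕ} {W : ℕ → Pt} (hk : 1 ≤ k) (hc : 1 ≤ c) {P₁ : SimplePolygon (k + 1 + 1)} {P₂ : SimplePolygon (c + 1 + 1)}
    (h1 : ∀ a ≤ k + 1, P₁.vs 0 a = W a) (h2 : ∀ a ≤ c + 1, P₂.vs 0 a = W (k + 1 + a))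
    (hper : W (k + 1 + (c + 1)) = W 0)
    (hM : ∀ᶠ X in 𝓝 (midpoint ℝ (W 0) (W (k + 1))), X ∉ segment ℝ (W 0) (W (k + 1)) → P₁.wind X + P₂.wind X = 1) :
    P₁.PosOriented ∧ P₂.PosOriented := by
  obtain ⟨a, ha, ha1, ha2⟩ := structure_thm' (by omega) P₁
  obtain ⟨b, hb, hb1, hb2⟩ := structure_thm' (by omega) P₂
  set M := midpoint ℝ (W 0) (W (k + 1))
  have e1 : P₁.p ((k + 1 : ℕ) : ZMod (k + 1 + 1)) = W (k + 1) := by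
    rw [← h1 (k + 1) le_rfl, vs, zero_add]
  have e2 : P₁.p (((k + 1 : ℕ) : ZMod (k + 1 + 1)) + 1) = W 0 := by
    rw [← h1 0 (by omega), ← (P₁.vs_cyc 0).per, vs, zero_add, Nat.cast_add (k + 1) 1, Nat.cast_one]
  have e3 : P₂.p ((c + 1 : ℕ) : ZMod (c + 1 + 1)) = W 0 := by
    rw [← hper, ← h2 (c + 1) le_rfl, vs, zero_add]
  have e4 : P₂.p (((c + 1 : ℕ) : ZMod (c + 1 + 1)) + 1) = W (k + 1) := by
    have := h2 0 (by omega)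
    rw [add_zero] at this
    rw [← this, ← (P₂.vs_cyc 0).per, vs, zero_add, Nat.cast_add (c + 1) 1, Nat.cast_one]
  have hM1 : M ∈ openSegment ℝ (P₁.p ((k + 1 : ℕ) : ZMod (k + 1 + 1))) (P₁.p (((k + 1 : ℕ) : ZMod (k + 1 + 1)) + 1)) := by
    rw [e1, e2, openSegment_symm]; exact midpoint_mem_openSegment _ _
  have hM2 : M ∈ openSegment ℝ (P₂.p ((c + 1 : ℕ) : ZMod (c + 1 + 1))) (P₂.p (((c + 1 : ℕ) : ZMod (c + 1 + 1)) + 1)) := by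
    rw [e3, e4]; exact midpoint_mem_openSegment _ _
  obtain ⟨X, hX, hX1, hX2, hX3⟩ := ((freq_side (by omega) hM1).2.and_eventually
    ((ha2 _ _ hM1).and ((hb2 _ _ hM2).and hM))).exists
  have f1 := hX1.2 hX
  have f2 : P₂.wind X = b + 1 := by
    apply (hX2.1 _).2
    unfold side at hX ⊢
    rw [e1, e2] at hX
    rw [e3, e4, cross_anti]; linarith
  have hs : X ∉ segment ℝ (W 0) (W (k + 1)) := by
    have := not_mem_edge f1.1 ((k + 1 : ℕ) : ZMod (k + 1 + 1))
    rw [e1, e2, segment_symm] at this; exact this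
  have h3 := hX3 hs
  rw [f1.2, f2] at h3
  have h4 : a + b = 0 := by
    have : (a : ℝ) + b = 0 := by linarith
    exact_mod_cast this
  rw [ha1, hb1]
  omega

end SimplePolygon
end

section fin
open Filter Topology
namespace SimplePolygon

lemma chord_k {m : ℕ} [NeZero m] {P : SimplePolygon m} {i j : ZMod m} {q : Pt}
    (hq : q ∈ openSegment ℝ (P.p j) (P.p (j + 1)))
    (h1 : 0 < cross (P.p (i + 1) - P.p i) (q - P.p i)) (h2 : 0 < cross (P.p i - P.p (i - 1)) (q - P.p i)) :
    1 ≤ (j - i).val ∧ (j - i).val + 2 ≤ m := by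
  obtain ⟨θ, _, _, hθ⟩ := seg_half hq
  have hlt := ZMod.val_lt (j - i)
  constructor
  · by_contra hn
    have h0 : (j - i).val = 0 := by omega
    rw [ZMod.val_eq_zero, sub_eq_zero] at h0
    subst h0
    rw [hθ, add_sub_cancel_left, cross_smul_r, cross_self'] at h1
    linarith
  · by_contra hn
    have h0 : (j - i).val + 1 = m := by omega
    have h3 : (((j - i).val + 1 : ℕ) : ZMod m) = 0 := by rw [h0]; simp
    push_cast at h3
    rw [ZMod.natCast_val, ZMod.cast_id] at h3
    have h4 : i = j + 1 := by linear_combination -h3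
    subst h4
    rw [add_sub_cancel_right] at h2
    have e : q - P.p (j + 1) = (θ - 1) • (P.p (j + 1) - P.p j) := by rw [hθ]; module
    rw [e, cross_smul_r, cross_self'] at h2
    linarith

lemma reflex_fin {m : ℕ} [NeZero m] (P : SimplePolygon m) : P.reflexSet.Finite :=
  (Set.finite_range P.p).subset (by rintro x ⟨i, _, rfl⟩; exact ⟨i, rfl⟩)

end SimplePolygon
end fin

/-- **Splitting a polygon at a reflex vertex.**
Let `P` be a positively oriented simple polygon and `r = p i` a reflex vertex of `P`.
Then some ray from `r` hits the boundary of `P` first in a point `q` that is not a vertex,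
with the open segment `rq` inside the open bounded region of `P`, and the segment `rq`
splits `P` into two simple polygons `P₁, P₂` (their boundaries consist of the segment
`rq` together with the two boundary arcs of `P` between `r` and `q`) such that all
reflex vertices of `P₁` and `P₂` are reflex vertices of `P`, both `P₁` and `P₂` have
strictly fewer reflex vertices than `P`, and `r` and `q` are convex vertices of both. -/
theorem split_polygon_at_reflex_vertex {m : ℕ} (hm : 3 ≤ m) (P : SimplePolygon m)
    (hor : P.PosOriented) (i : ZMod m) (hi : P.IsReflex i) :
    ∃ q ∈ P.boundary, q ∉ P.vertexSet ∧
      openSegment ℝ (P.p i) q ⊆ P.openRegion ∧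
      ∃ (m₁ m₂ : ℕ) (_ : 3 ≤ m₁) (_ : 3 ≤ m₂)
        (P₁ : SimplePolygon m₁) (P₂ : SimplePolygon m₂),
        P₁.PosOriented ∧ P₂.PosOriented ∧
        P₁.boundary ∪ P₂.boundary = P.boundary ∪ segment ℝ (P.p i) q ∧
        P₁.boundary ∩ P₂.boundary = segment ℝ (P.p i) q ∧
        P₁.vertexSet ∪ P₂.vertexSet = P.vertexSet ∪ {q} ∧
        P₁.vertexSet ∩ P₂.vertexSet = {P.p i, q} ∧
        P₁.reflexSet ⊆ P.reflexSet ∧ P₂.reflexSet ⊆ P.reflexSet ∧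
        P₁.reflexSet.ncard < P.reflexSet.ncard ∧
        P₂.reflexSet.ncard < P.reflexSet.ncard ∧
        P.p i ∉ P₁.reflexSet ∧ P.p i ∉ P₂.reflexSet ∧
        q ∉ P₁.reflexSet ∧ q ∉ P₂.reflexSet := by
  haveI : NeZero m := ⟨by omega⟩
  obtain ⟨q, j, hq, hqv, hseg, hc1, hc2, hc3⟩ := SimplePolygon.exists_chord hm P hor i hi
  obtain ⟨hk1, hk2⟩ := SimplePolygon.chord_k hq hc1 hc2
  set k := (j - i).val with hkdef
  obtain ⟨c, hmc⟩ : ∃ c, m = k + 1 + c := ⟨m - (k + 1), by omega⟩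
  have hc : 1 ≤ c := by omega
  have hcyc := P.vs_cyc i
  set v := P.vs i with hvdef
  have v0 : v 0 = P.p i := by simp [hvdef, SimplePolygon.vs]
  have vk : v k = P.p j := P.vs_val i j
  have vk1 : v (k + 1) = P.p (j + 1) := by
    rw [hvdef, ← SimplePolygon.vs_succ]; simp [hkdef]
  have v1 : v 1 = P.p (i + 1) := by simp [hvdef, SimplePolygon.vs]
  have vm : v (m - 1) = P.p (i - 1) := by
    simp only [hvdef, SimplePolygon.vs]
    rw [Nat.cast_sub (by omega)]; simp [sub_eq_add_neg]
  have hqo : q ∈ openSegment ℝ (v k) (v (k + 1)) := by rw [vk, vk1]; exact hq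
  have hqv' : ∀ a, q ≠ v a := fun a h => hqv ⟨_, h.symm⟩
  have hW := ins_cyc hcyc hk1 hk2 hqo hqv'
  have hbd := ins_bdry hcyc hk1 hk2 hqo hqv'
  have hrefl := fun a => ins_reflex hcyc hk1 hk2 hqo hqv' (a := a)
  have hsum := fun X => ins_sum hcyc hk1 hk2 hqo hqv' (X := X)
  set W := ins v q k with hWdef
  have W0 : W 0 = P.p i := by rw [hWdef, ins_le (by omega), v0]
  have Wk : W (k + 1) = q := ins_k
  have hPb : ∀ x, x ∈ P.boundary ↔ ∃ a < m + 1, x ∈ segment ℝ (W a) (W (a + 1)) := fun x => by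
    rw [hbd x]; exact P.mem_boundary_vs i x
  have hch : ∀ a ≤ m, ∀ x ∈ segment ℝ (W a) (W (a + 1)), x ∈ segment ℝ (W 0) (W (k + 1)) → x = W 0 ∨ x = W (k + 1) := by
    intro a ha x hx hy
    by_contra hn
    push Not at hn
    rw [W0, Wk] at hy hn
    have := mem_openSegment_of_ne_left_right hn.1.symm hn.2.symm hy
    exact (hseg x this).1 ((hPb x).2 ⟨a, by omega, hx⟩)
  have A1 := arc_one hW hk1 hc hmc hch
  have A2 := arc_two hW hk1 hc hmc hch
  obtain ⟨P₁, h1⟩ := A1.exists_poly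
  obtain ⟨P₂, h2⟩ := A2.exists_poly
  have e : k + 1 + (c + 1) = m + 1 := by omega
  have horient : P₁.PosOriented ∧ P₂.PosOriented := by
    apply SimplePolygon.orient hk1 hc h1 h2 (by rw [e, hW.per])
    set M := midpoint ℝ (W 0) (W (k + 1)) with hM
    have hMs : M ∈ openSegment ℝ (P.p i) q := by
      rw [hM, W0, Wk]; exact midpoint_mem_openSegment _ _
    obtain ⟨hMb, hMw⟩ := hseg M hMs
    obtain ⟨δ, hδ, hball⟩ := Metric.isOpen_iff.1 P.isCompact_boundary.isClosed.isOpen_compl M hMb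
    have E1 : ∀ᶠ X in nhds M, X ∈ Metric.ball M δ := Metric.ball_mem_nhds _ hδ
    have E2 : ∀ᶠ X in nhds M, cross (v k - X) (v (k + 1) - X) ≠ 0 := by
      have hcont : Continuous (fun X : Pt => cross (v k - X) (v (k + 1) - X)) := by
        unfold cross; fun_prop
      apply hcont.continuousAt.eventually_ne
      obtain ⟨θ, _, _, hθ⟩ := seg_half hqo
      obtain ⟨τ, hτ0, hτ1, hτ⟩ := seg_half (openSegment_symm ℝ (P.p i) q ▸ hMs)
      have e1 : cross (v k - M) (v (k + 1) - M) = τ * cross (v (k + 1) - v k) (P.p i - q) := by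
        rw [hτ]
        generalize P.p i - q = u
        rw [hθ]
        simp only [cross, Prod.fst_sub, Prod.snd_sub, Prod.fst_add, Prod.snd_add, Prod.smul_fst, Prod.smul_snd, smul_eq_mul]
        ring
      rw [e1, vk, vk1]
      exact (mul_pos hτ0 hc3).ne'
    filter_upwards [E1, E2] with X hX1 hX2 hX3
    rw [wind_add hW hk1 hc hmc hch h1 h2 hX3]
    have hXb : X ∉ P.boundary := hball hX1
    rw [hsum X ?_ hX2, ← SimplePolygon.wind_vs, ← hMw]
    · exact SimplePolygon.wind_const (convex_ball M δ).isPreconnected (fun Y hY => hball hY) hX1 (Metric.mem_ball_self hδ)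
    · rw [vk, vk1]; exact SimplePolygon.not_mem_edge hXb j
  -- convexity at the new corners
  obtain ⟨θ, hθ0, hθ1, hθ⟩ := seg_half hqo
  have hc3' : 0 < cross (v (k + 1) - v k) (P.p i - q) := by rw [vk, vk1]; exact hc3
  have r1 : ∀ x ∈ P₁.reflexSet, x ∈ P.reflexSet ∧ x ≠ P.p i ∧ x ≠ q := by
    intro x hx
    rcases A1.reflex h1 hx with ⟨a, ha, h3, rfl⟩ | h3 | h3
    · obtain ⟨b, hb, hbe⟩ := hrefl a (by omega) (by omega) h3
      refine ⟨?_, ?_, ?_⟩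
      · rw [hbe]; exact P.reflex_of i b hb
      · rw [← W0]; intro h; have := A1.inj _ _ (by omega) (by omega) h; omega
      · rw [← Wk]; intro h; have := A1.inj _ _ (by omega) (by omega) h; omega
    · exfalso
      have e1 : W (k + 1 - 1) = v k := ins_le (by omega)
      have e2 : q - v k = θ • (v (k + 1) - v k) := by rw [hθ]; abel
      rw [Wk, W0, e1, e2, cross_smul_l] at h3
      have := mul_pos hθ0 hc3'
      linarith
    · exfalso
      have e1 : W 1 = P.p (i + 1) := by rw [hWdef, ins_le (by omega), v1]
      have e2 : cross (P.p i - q) (P.p (i + 1) - P.p i) = cross (P.p (i + 1) - P.p i) (q - P.p i) := by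
        simp only [cross, Prod.fst_sub, Prod.snd_sub]; ring
      rw [Wk, W0, e1, e2] at h3
      linarith
  have r2 : ∀ x ∈ P₂.reflexSet, x ∈ P.reflexSet ∧ x ≠ P.p i ∧ x ≠ q := by
    intro x hx
    have Wm : W (k + 1 + (c + 1)) = P.p i := by rw [e, hW.per, W0]
    rcases A2.reflex h2 hx with ⟨a, ha, h3, rfl⟩ | h3 | h3
    · obtain ⟨b, hb, hbe⟩ := hrefl (k + 1 + a) (by omega) (by omega) h3
      refine ⟨?_, ?_, ?_⟩
      · have hbe' : W (k + 1 + (a + 1)) = v (b + 1) := hbe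
        rw [hbe']; exact P.reflex_of i b hb
      · rw [← Wm]; intro h; have := A2.inj _ _ (by omega) (by omega) h; omega
      · rw [← Wk]; intro h; have := A2.inj (a + 1) 0 (by omega) (by omega) h; omega
    · exfalso
      have e1 : W (k + 1 + (c + 1 - 1)) = P.p (i - 1) := by
        obtain ⟨c', rfl⟩ : ∃ c', c = c' + 1 := ⟨c - 1, by omega⟩
        have : W (k + 1 + c' + 1) = v (k + 1 + c') := ins_gt (by omega)
        rw [← vm, hmc]
        exact this
      simp only [Wm, e1, add_zero, Wk] at h3
      linarith
    · exfalso
      have e1 : W (k + 1 + 1) = v (k + 1) := ins_gt le_rfl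
      have e2 : v (k + 1) - q = (1 - θ) • (v (k + 1) - v k) := by rw [hθ]; module
      simp only [Wm, e1, add_zero, Wk] at h3
      rw [e2, cross_smul_r, ← neg_sub (P.p i) q] at h3
      have e3 : cross (-(P.p i - q)) (v (k + 1) - v k) = cross (v (k + 1) - v k) (P.p i - q) := by
        generalize P.p i - q = u
        simp only [cross, Prod.fst_neg, Prod.snd_neg]; ring
      rw [e3] at h3
      have := mul_pos (by linarith : 0 < 1 - θ) hc3'
      linarith
  have hri : P.p i ∈ P.reflexSet := ⟨i, hi, rfl⟩
  refine ⟨q, mem_iUnion.2 ⟨j, openSegment_subset_segment _ _ _ hq⟩, hqv, ?_, k + 1 + 1, c + 1 + 1, by omega, by omega, P₁, P₂,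
    horient.1, horient.2, ?_, ?_, ?_, ?_, fun x hx => (r1 x hx).1, fun x hx => (r2 x hx).1, ?_, ?_,
    fun h => (r1 _ h).2.1 rfl, fun h => (r2 _ h).2.1 rfl, fun h => (r1 _ h).2.2 rfl, fun h => (r2 _ h).2.2 rfl⟩
  · intro X hX
    exact SimplePolygon.mem_openRegion (hseg X hX).1 (by rw [(hseg X hX).2]; exact one_ne_zero)
  · ext x
    rw [bdry_union hW hk1 hc hmc hch h1 h2, mem_union, hPb, W0, Wk]
  · rw [bdry_inter hW hk1 hc hmc hch h1 h2, W0, Wk]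
  · ext x
    rw [vert_union hW hk1 hc hmc hch h1 h2, mem_union, P.mem_vertex_vs i, mem_singleton_iff]
    constructor
    · rintro ⟨a, ha, rfl⟩
      rcases Nat.lt_trichotomy a (k + 1) with h | h | h
      · exact Or.inl ⟨a, by omega, ins_le (by omega)⟩
      · rw [h, Wk]; exact Or.inr rfl
      · obtain ⟨b, rfl⟩ : ∃ b, a = b + 1 := ⟨a - 1, by omega⟩
        exact Or.inl ⟨b, by omega, ins_gt (by omega)⟩
    · rintro (⟨a, ha, rfl⟩ | rfl)
      · rcases Nat.lt_or_ge k a with h | h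
        · exact ⟨a + 1, by omega, (ins_gt (by omega)).symm⟩
        · exact ⟨a, by omega, (ins_le h).symm⟩
      · exact ⟨k + 1, by omega, Wk.symm⟩
  · rw [vert_inter hW hk1 hc hmc hch h1 h2, W0, Wk]
  · apply Set.ncard_lt_ncard _ P.reflex_fin
    exact ⟨fun x hx => (r1 x hx).1, fun h => (r1 _ (h hri)).2.1 rfl⟩
  · apply Set.ncard_lt_ncard _ P.reflex_fin
    exact ⟨fun x hx => (r2 x hx).1, fun h => (r2 _ (h hri)).2.1 rfl⟩
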